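/- arXiv:math/0108153 — 2 statements merged into one kernel-verified Lean document; each statement's English description precedes it below -/
import Mathlib

section
/- Let n ≥ 1, let D ⊆ ℝⁿ be an open, connected, simply connected set and set M := D × ℝ ⊆ ℝ^{n+1}. Let r ∈ ℕ ∪ {∞} with r ≥ 1 and let v = (v¹, …, v^{n+1}) : M → ℝ^{n+1} be a C^r map such that: (i) v^{n+1}(x) ≠ 0 for all x ∈ M; (ii) there is a constant C > 0 with |v^i(x)| ≤ C·|v^{n+1}(x)| for all x ∈ M and all i ∈ {1,…,n}; (iii) the one-form ω := Σ_{k=1}^{n+1} v^k dx_k is integrable, i.e. for all x ∈ M and all i, j, k ∈ {1,…,n+1}: v^i(x)·(∂_j v^k(x) − ∂_k v^j(x)) − v^j(x)·(∂_i v^k(x) − ∂_k v^i(x)) + v^k(x)·(∂_i v^j(x) − ∂_j v^i(x)) = 0. Then there exist a C^r function f : M → ℝ and a C^{r−1} function λ : M → ℝ (C^∞ if r = ∞) with λ(x) ≠ 0 for all x ∈ M such that ∂_k f(x) = λ(x)·v^k(x) for all x ∈ M and all k ∈ {1,…,n+1}, i.e. df = λ ω on M. -/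
section EMHelpers
open Set Filter Topology Metric
open scoped NNReal

/-- Abstract monodromy: local flat transport on a simply connected space. -/
theorem em_monodromy {X : Type*} [TopologicalSpace X] [SimplyConnectedSpace X]
    [LocallyPathConnectedSpace X] {F : Type*} (B : X → Set X) (hBo : ∀ x, IsOpen (B x))
    (hBm : ∀ x, x ∈ B x) (hBc : ∀ x, IsPreconnected (B x))
    (L : X → F → X → F) (hL0 : ∀ x τ, L x τ x = τ)
    (hL : ∀ i, ∀ x ∈ B i, ∀ y ∈ B i, ∀ z ∈ B i, ∀ τ, L y (L x τ y) z = L x τ z) (p₀ : X) :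
    ∃ f : X → F → F, (∀ τ, f p₀ τ = τ) ∧
      ∀ i, ∀ x ∈ B i, ∀ y ∈ B i, ∀ τ, f y (L x τ y) = f x τ := by
  let _ : TopologicalSpace F := ⊥
  have : DiscreteTopology F := ⟨rfl⟩
  let Z : FiberBundleCore X X F :=
    { baseSet := B
      isOpen_baseSet := hBo
      indexAt := id
      mem_baseSet_at := hBm
      coordChange := fun i j x τ => L x (L i τ x) j
      coordChange_self := by
        intro i x hx v
        rw [hL i i (hBm i) x hx i (hBm i), hL0]
      continuousOn_coordChange := by
        rintro i j ⟨x, τ⟩ ⟨⟨hxi, hxj⟩, -⟩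
        apply ContinuousAt.continuousWithinAt
        refine (continuousAt_const (y := L x (L i τ x) j)).congr ?_
        have h1 : ∀ᶠ y in 𝓝 x, y ∈ B i ∩ B j :=
          ((hBo i).inter (hBo j)).mem_nhds ⟨hxi, hxj⟩
        have h2 : ∀ᶠ σ in 𝓝 τ, σ = τ := by simp [nhds_discrete]
        rw [nhds_prod_eq]
        filter_upwards [h1.prod_mk h2] with ⟨y, σ⟩ ⟨hy, hσ⟩
        simp only at hy hσ ⊢
        subst hσ
        rw [← hL i i (hBm i) x hxi y hy.1, hL j x hxj y hy.2 j (hBm j)]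
      coordChange_comp := by
        rintro i j k x ⟨⟨hi, hj⟩, hk⟩ v
        rw [hL j x hj j (hBm j) x hj, hL0] }
  have cov : IsCoveringMap (Bundle.TotalSpace.proj : Z.TotalSpace → X) :=
    FiberBundle.isCoveringMap (F := F) (E := Z.Fiber)
  have key := fun (x : X) (τ : F) =>
    cov.existsUnique_continuousMap_lifts (ContinuousMap.id X) x (⟨x, τ⟩ : Z.TotalSpace) rfl
  choose S hS hSu using key
  have hproj : ∀ x τ y, (S x τ y).1 = y := fun x τ y => congrFun (hS x τ).2 y
  let g : X → F → X → F := fun x τ y => (S x τ y).2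
  have hSg : ∀ x τ y, S x τ y = (⟨y, g x τ y⟩ : Z.TotalSpace) := by
    intro x τ y
    have := hproj x τ y
    rcases h : S x τ y with ⟨b, c⟩
    rw [h] at this
    simp only at this
    subst this
    show _ = (⟨b, (S x τ b).2⟩ : Z.TotalSpace)
    rw [h]
  have hgx : ∀ x τ, g x τ x = τ := by
    intro x τ
    show (S x τ x).2 = τ
    rw [(hS x τ).1]
  have hconst : ∀ x τ i, ∀ y ∈ B i, ∀ z ∈ B i, L y (g x τ y) i = L z (g x τ z) i := by
    intro x τ i y hy z hz
    have hc : ContinuousOn (fun y => ((Z.localTriv i) (S x τ y)).2) (B i) := by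
      refine continuous_snd.comp_continuousOn ?_
      refine (Z.localTriv i).continuousOn.comp (S x τ).continuous.continuousOn ?_
      intro w hw
      show (S x τ w).1 ∈ B i
      rw [hproj]
      exact hw
    have hcc := (hBc i).constant hc hy hz
    simp only [hSg] at hcc
    change L y (L y (g x τ y) y) i = L z (L z (g x τ z) z) i at hcc
    rwa [hL0, hL0] at hcc
  have hloc : ∀ x τ i, ∀ y ∈ B i, ∀ z ∈ B i, g x τ z = L y (g x τ y) z := by
    intro x τ i y hy z hz
    have h := hconst x τ i y hy z hz
    have h2 : L i (L y (g x τ y) i) z = L i (L z (g x τ z) i) z := by rw [h]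
    rw [hL i y hy i (hBm i) z hz, hL i z hz i (hBm i) z hz, hL0] at h2
    exact h2.symm
  refine ⟨fun x τ => g x τ p₀, fun τ => hgx _ _, ?_⟩
  intro i x hx y hy τ
  have h1 : L x τ y = g x τ y := by
    rw [hloc x τ i x hx y hy, hgx]
  have h2 : S x τ = S y (g x τ y) := by
    apply hSu y (g x τ y)
    exact ⟨hSg _ _ _, (hS x τ).2⟩
  show (S y (L x τ y) p₀).2 = (S x τ p₀).2
  rw [h1, ← h2]


theorem em_param_bound {H : Type} [NormedAddCommGroup H]
    {F : Type} [NormedAddCommGroup F] {W : Set (ℝ × H)} (hW : IsOpen W)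
    {G : ℝ × H → F} (hG : ContinuousOn G W) {θ₀ : H}
    (hθ : ∀ s ∈ Icc (0:ℝ) 1, (s, θ₀) ∈ W) :
    ∃ C : ℝ, ∀ᶠ θ in 𝓝 θ₀, ∀ s ∈ Icc (0:ℝ) 1, (s, θ) ∈ W ∧ ‖G (s, θ)‖ ≤ C := by
  have hc : ContinuousOn (fun s : ℝ => G (s, θ₀)) (Icc 0 1) :=
    hG.comp (by fun_prop) hθ
  obtain ⟨C, hC⟩ := isCompact_Icc.exists_bound_of_continuousOn hc
  refine ⟨C + 1, ?_⟩
  apply isCompact_Icc.eventually_forall_of_forall_eventually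
  intro s hs
  have h1 : ∀ᶠ z in 𝓝 (s, θ₀), z ∈ W := hW.mem_nhds (hθ s hs)
  have h2 : ∀ᶠ z in 𝓝 (s, θ₀), ‖G z‖ < C + 1 := by
    have := (hG.continuousAt (hW.mem_nhds (hθ s hs))).norm
    exact this.eventually_lt continuousAt_const (by have := hC s hs; linarith)
  have h3 := h1.and h2
  have hsw : Tendsto (fun z : H × ℝ => (z.2, z.1)) (𝓝 (θ₀, s)) (𝓝 (s, θ₀)) :=
    (continuous_swap.tendsto (θ₀, s))
  filter_upwards [hsw.eventually h3] with z hz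
  exact ⟨hz.1, hz.2.le⟩

theorem em_param_cont {H : Type} [NormedAddCommGroup H]
    {F : Type} [NormedAddCommGroup F] [NormedSpace ℝ F] {W : Set (ℝ × H)} (hW : IsOpen W)
    {G : ℝ × H → F} (hG : ContinuousOn G W) {θ₀ : H}
    (hθ : ∀ s ∈ Icc (0:ℝ) 1, (s, θ₀) ∈ W) :
    ContinuousAt (fun θ => ∫ s in (0:ℝ)..1, G (s, θ)) θ₀ := by
  obtain ⟨C, hC⟩ := em_param_bound hW hG hθ
  have hu : uIoc (0:ℝ) 1 ⊆ Icc 0 1 := by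
    rw [uIoc_of_le zero_le_one]; exact Ioc_subset_Icc_self
  apply intervalIntegral.continuousAt_of_dominated_interval (bound := fun _ => C)
  · filter_upwards [hC] with θ h
    have : ContinuousOn (fun s : ℝ => G (s, θ)) (Icc 0 1) :=
      hG.comp (by fun_prop) (fun s hs => (h s hs).1)
    exact (this.mono hu).aestronglyMeasurable measurableSet_uIoc
  · filter_upwards [hC] with θ h
    exact Eventually.of_forall fun s hs => (h s (hu hs)).2
  · simp
  · refine Eventually.of_forall fun s hs => ?_
    exact (hG.continuousAt (hW.mem_nhds (hθ s (hu hs)))).comp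
      (by fun_prop : ContinuousAt (fun θ : H => (s, θ)) θ₀)

theorem em_param_contDiff {H : Type} [NormedAddCommGroup H] [NormedSpace ℝ H] (k : ℕ) :
    ∀ {F : Type} [NormedAddCommGroup F] [NormedSpace ℝ F] {W : Set (ℝ × H)} (_ : IsOpen W)
    {G : ℝ × H → F} (_ : ContDiffOn ℝ k G W) {Ω : Set H} (_ : IsOpen Ω)
    (_ : ∀ θ ∈ Ω, ∀ s ∈ Icc (0:ℝ) 1, (s, θ) ∈ W),
    ContDiffOn ℝ k (fun θ => ∫ s in (0:ℝ)..1, G (s, θ)) Ω := by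
  induction k with
  | zero =>
    intro F _ _ W hW G hG Ω hΩ h
    simp only [Nat.cast_zero, contDiffOn_zero] at hG ⊢
    exact fun θ hθ => (em_param_cont hW hG (h θ hθ)).continuousWithinAt
  | succ k ih =>
    intro F _ _ W hW G hG Ω hΩ h
    push_cast at hG ⊢
    rw [contDiffOn_succ_iff_fderiv_of_isOpen hW] at hG
    obtain ⟨hd, -, hG'⟩ := hG
    let G' : ℝ × H → H →L[ℝ] F := fun z => (fderiv ℝ G z).comp (ContinuousLinearMap.inr ℝ ℝ H)
    have hG'c : ContDiffOn ℝ k G' W := hG'.clm_comp contDiffOn_const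
    have hu : uIoc (0:ℝ) 1 ⊆ Icc 0 1 := by
      rw [uIoc_of_le zero_le_one]; exact Ioc_subset_Icc_self
    have key : ∀ θ₀ ∈ Ω, HasFDerivAt (fun θ => ∫ s in (0:ℝ)..1, G (s, θ))
        (∫ s in (0:ℝ)..1, G' (s, θ₀)) θ₀ := by
      intro θ₀ hθ₀
      obtain ⟨C, hC⟩ := em_param_bound hW hG'c.continuousOn (h θ₀ hθ₀)
      have hcont : ∀ θ, (∀ s ∈ Icc (0:ℝ) 1, (s, θ) ∈ W) →
          ContinuousOn (fun s : ℝ => G (s, θ)) (Icc 0 1) := fun θ hθ =>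
        hd.continuousOn.comp (by fun_prop) hθ
      have hcont' : ContinuousOn (fun s : ℝ => G' (s, θ₀)) (Icc 0 1) :=
        hG'c.continuousOn.comp (by fun_prop) (h θ₀ hθ₀)
      apply intervalIntegral.hasFDerivAt_integral_of_dominated_of_fderiv_le
        (F' := fun θ s => G' (s, θ)) (bound := fun _ => C) hC
      · filter_upwards [hC] with θ hθ
        exact ((hcont θ (fun s hs => (hθ s hs).1)).mono hu).aestronglyMeasurable measurableSet_uIoc
      · apply ContinuousOn.intervalIntegrable
        rw [uIcc_of_le zero_le_one]
        exact hcont θ₀ (h θ₀ hθ₀)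
      · exact (hcont'.mono hu).aestronglyMeasurable measurableSet_uIoc
      · exact Eventually.of_forall fun s hs θ hθ => (hθ s (hu hs)).2
      · simp
      · refine Eventually.of_forall fun s hs θ hθ => ?_
        have hda : DifferentiableAt ℝ G (s, θ) := hd.differentiableAt (hW.mem_nhds (hθ s (hu hs)).1)
        exact hda.hasFDerivAt.comp θ (hasFDerivAt_prodMk_right s θ)
    rw [contDiffOn_succ_iff_fderiv_of_isOpen hΩ]
    refine ⟨fun θ hθ => (key θ hθ).differentiableAt.differentiableWithinAt, by simp, ?_⟩
    exact (ih hW hG'c hΩ h).congr fun θ hθ => (key θ hθ).fderiv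

theorem em_unif_taylor {E F : Type} [NormedAddCommGroup E] [NormedSpace ℝ E]
    [NormedAddCommGroup F] [NormedSpace ℝ F] {Ω : Set E} (hΩ : IsOpen Ω) {f : E → F}
    (hf : ContDiffOn ℝ 1 f Ω) {S : Set E} (hS : IsCompact S) (hSΩ : S ⊆ Ω) {ε : ℝ} (hε : 0 < ε) :
    ∀ᶠ h in 𝓝 (0:E), ∀ z ∈ S, ‖f (z + h) - f z - fderiv ℝ f z h‖ ≤ ε * ‖h‖ := by
  apply hS.eventually_forall_of_forall_eventually
  intro z hz
  have hzΩ := hΩ.mem_nhds (hSΩ hz)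
  have hca : ContDiffAt ℝ 1 f z := hf.contDiffAt hzΩ
  have h1 := (hca.hasStrictFDerivAt one_ne_zero).isLittleO.def (half_pos hε)
  have h2 : ∀ᶠ y in 𝓝 z, ‖fderiv ℝ f y - fderiv ℝ f z‖ < ε / 2 := by
    have hc : ContinuousAt (fderiv ℝ f) z :=
      (hf.continuousOn_fderiv_of_isOpen hΩ le_rfl).continuousAt hzΩ
    simpa [dist_eq_norm] using (Metric.tendsto_nhds.1 hc) (ε/2) (half_pos hε)
  have t1 : Tendsto (fun w : E × E => (w.2 + w.1, w.2)) (𝓝 (0, z)) (𝓝 (z, z)) := by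
    have : Continuous (fun w : E × E => (w.2 + w.1, w.2)) := by fun_prop
    simpa using this.tendsto (0, z)
  have t2 : Tendsto (fun w : E × E => w.2) (𝓝 (0, z)) (𝓝 z) := continuous_snd.tendsto (0, z)
  filter_upwards [t1.eventually h1, t2.eventually h2] with ⟨h, y⟩ e1 e2
  simp only [add_sub_cancel_left] at e1 e2 ⊢
  have : f (y + h) - f y - fderiv ℝ f y h
      = (f (y + h) - f y - fderiv ℝ f z h) - (fderiv ℝ f y - fderiv ℝ f z) h := by
    simp
  rw [this]
  calc _ ≤ ε / 2 * ‖h‖ + ε / 2 * ‖h‖ := by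
        refine (norm_sub_le _ _).trans (add_le_add e1 ?_)
        exact ((fderiv ℝ f y - fderiv ℝ f z).le_opNorm h).trans (by gcongr)
    _ = _ := by ring


structure EMData {E : Type} [NormedAddCommGroup E] [NormedSpace ℝ E] (D : Set E)
    (a : E × ℝ → E →L[ℝ] ℝ) (K : ℝ) : Prop where
  isOpen : IsOpen D
  c1 : ContDiffOn ℝ 1 a (D ×ˢ univ)
  hK : 0 ≤ K
  bound : ∀ z ∈ D ×ˢ (univ : Set ℝ), ‖a z‖ ≤ K
  flat : ∀ z ∈ D ×ˢ (univ : Set ℝ), ∀ u w : E,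
    fderiv ℝ a z (u, a z u) w = fderiv ℝ a z (w, a z w) u

def EMSol {E : Type} [NormedAddCommGroup E] [NormedSpace ℝ E]
    (a : E × ℝ → E →L[ℝ] ℝ) (p q : E) (x : ℝ → ℝ) : Prop :=
  ∀ s ∈ Icc (0:ℝ) 1, HasDerivWithinAt x (a (p + s • (q - p), x s) (q - p)) (Icc 0 1) s

open Classical in
noncomputable def emL {E : Type} [NormedAddCommGroup E] [NormedSpace ℝ E]
    (a : E × ℝ → E →L[ℝ] ℝ) (p : E) (t : ℝ) (q : E) : ℝ :=
  if h : ∃ x : ℝ → ℝ, x 0 = t ∧ EMSol a p q x then h.choose 1 else 0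

section
variable {E : Type} [NormedAddCommGroup E] [NormedSpace ℝ E] {D : Set E}
    {a : E × ℝ → E →L[ℝ] ℝ} {K : ℝ}

theorem EMData.openProd (h : EMData D a K) : IsOpen (D ×ˢ (univ : Set ℝ)) :=
  h.isOpen.prod isOpen_univ

theorem EMData.diffAt (h : EMData D a K) {p : E} (hp : p ∈ D) (t : ℝ) :
    DifferentiableAt ℝ a (p, t) :=
  (h.c1.differentiableOn one_ne_zero).differentiableAt (h.openProd.mem_nhds ⟨hp, trivial⟩)

theorem EMData.contFderiv (h : EMData D a K) : ContinuousOn (fderiv ℝ a) (D ×ˢ univ) :=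
  h.c1.continuousOn_fderiv_of_isOpen h.openProd le_rfl

theorem EMData.lip (h : EMData D a K) {S : Set E} (hS : IsCompact S) (hSD : S ⊆ D) (R : ℝ) :
    ∃ C : ℝ≥0, ∀ p ∈ S, LipschitzOnWith C (fun x : ℝ => a (p, x)) (closedBall 0 R) := by
  have hc : ContinuousOn (fderiv ℝ a) (S ×ˢ closedBall (0:ℝ) R) :=
    h.contFderiv.mono (prod_mono hSD (subset_univ _))
  obtain ⟨C, hC⟩ := (hS.prod (isCompact_closedBall (0:ℝ) R)).exists_bound_of_continuousOn (f := fun z => fderiv ℝ a z) hc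
  refine ⟨Real.toNNReal C, fun p hp => ?_⟩
  refine (convex_closedBall (0:ℝ) R).lipschitzOnWith_of_nnnorm_hasFDerivWithin_le
    (f' := fun x => (fderiv ℝ a (p, x)).comp (ContinuousLinearMap.inr ℝ E ℝ)) ?_ ?_
  · intro x hx
    exact ((h.diffAt (hSD hp) x).hasFDerivAt.comp x
      (hasFDerivAt_prodMk_right p x)).hasFDerivWithinAt
  · intro x hx
    rw [← NNReal.coe_le_coe, coe_nnnorm]
    refine le_trans ?_ (Real.le_coe_toNNReal C)
    refine le_trans ?_ (hC (p, x) ⟨hp, hx⟩)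
    refine (ContinuousLinearMap.opNorm_comp_le _ _).trans ?_
    exact mul_le_of_le_one_right (norm_nonneg _) (ContinuousLinearMap.norm_inr_le_one ℝ E ℝ)

theorem em_seg_mem {p q : E} (hseg : segment ℝ p q ⊆ D) {s : ℝ} (hs : s ∈ Icc (0:ℝ) 1) :
    p + s • (q - p) ∈ D := by
  apply hseg
  rw [segment_eq_image']
  exact ⟨s, hs, rfl⟩

theorem em_seg_compact (p q : E) : IsCompact (segment ℝ p q) := by
  rw [segment_eq_image']
  exact isCompact_Icc.image (by fun_prop)

theorem em_seg_mem' {p q : E} {s : ℝ} (hs : s ∈ Icc (0:ℝ) 1) :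
    p + s • (q - p) ∈ segment ℝ p q := by
  rw [segment_eq_image']
  exact ⟨s, hs, rfl⟩

theorem EMData.sol_bound (h : EMData D a K) {p q : E} (hseg : segment ℝ p q ⊆ D) {x : ℝ → ℝ}
    (hx : EMSol a p q x) {s : ℝ} (hs : s ∈ Icc (0:ℝ) 1) : |x s| ≤ |x 0| + K * ‖q - p‖ := by
  have h1 : ∀ s ∈ Icc (0:ℝ) 1, ‖a (p + s • (q - p), x s) (q - p)‖ ≤ K * ‖q - p‖ := by
    intro s hs
    refine ((a _).le_opNorm _).trans ?_
    gcongr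
    exact h.bound _ ⟨em_seg_mem hseg hs, trivial⟩
  have h2 := (convex_Icc (0:ℝ) 1).norm_image_sub_le_of_norm_hasDerivWithin_le hx h1
    (left_mem_Icc.2 zero_le_one) hs
  rw [Real.norm_eq_abs, sub_zero, Real.norm_eq_abs, abs_of_nonneg hs.1] at h2
  have h3 : K * ‖q - p‖ * s ≤ K * ‖q - p‖ :=
    mul_le_of_le_one_right (mul_nonneg h.hK (norm_nonneg _)) hs.2
  have := abs_sub_abs_le_abs_sub (x s) (x 0)
  linarith

theorem EMSol.contOn {p q : E} {x : ℝ → ℝ} (hx : EMSol a p q x) : ContinuousOn x (Icc 0 1) :=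
  fun s hs => (hx s hs).continuousWithinAt

theorem em_Ici {x : ℝ → ℝ} {x' s : ℝ} (hx : HasDerivWithinAt x x' (Icc 0 1) s)
    (hs : s ∈ Ico (0:ℝ) 1) : HasDerivWithinAt x x' (Ici s) s :=
  hx.mono_of_mem_nhdsWithin (Icc_mem_nhdsGE_of_mem hs)

theorem EMData.lip' (h : EMData D a K) {p q : E} (hseg : segment ℝ p q ⊆ D) (R : ℝ) :
    ∃ C : ℝ≥0, ∀ s ∈ Icc (0:ℝ) 1, LipschitzOnWith C
      (fun x : ℝ => a (p + s • (q - p), x) (q - p)) (closedBall 0 R) := by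
  obtain ⟨C, hC⟩ := h.lip (em_seg_compact p q) hseg R
  refine ⟨‖ContinuousLinearMap.apply ℝ ℝ (q - p)‖₊ * C, fun s hs => ?_⟩
  exact (ContinuousLinearMap.lipschitz (ContinuousLinearMap.apply ℝ ℝ (q - p))).comp_lipschitzOnWith
    (hC _ (em_seg_mem' hs))

theorem EMData.exists_sol (h : EMData D a K) {p q : E} (hseg : segment ℝ p q ⊆ D) (t : ℝ) :
    ∃ x : ℝ → ℝ, x 0 = t ∧ EMSol a p q x := by
  set A : ℝ := K * ‖q - p‖ with hA
  have hA0 : 0 ≤ A := mul_nonneg h.hK (norm_nonneg _)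
  obtain ⟨C, hC⟩ := h.lip' hseg (|t| + A)
  have hsub : closedBall t A ⊆ closedBall 0 (|t| + A) := by
    apply closedBall_subset_closedBall'
    simp [add_comm]
  have hPL : IsPicardLindelof (fun (s : ℝ) (x : ℝ) => a (p + s • (q - p), x) (q - p))
      (⟨0, left_mem_Icc.2 zero_le_one⟩ : Icc (0:ℝ) 1) t ⟨A, hA0⟩ 0 ⟨A, hA0⟩ C := by
    constructor
    · exact fun s hs => (hC s hs).mono hsub
    · intro x hx
      have : ContinuousOn (fun s : ℝ => a (p + s • (q - p), x)) (Icc 0 1) :=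
        h.c1.continuousOn.comp (by fun_prop) (fun s hs => ⟨em_seg_mem hseg hs, trivial⟩)
      exact this.clm_apply continuousOn_const
    · intro s hs x hx
      refine ((a _).le_opNorm _).trans ?_
      show _ ≤ K * ‖q - p‖
      gcongr
      exact h.bound _ ⟨em_seg_mem hseg hs, trivial⟩
    · simp
  exact hPL.exists_eq_forall_mem_Icc_hasDerivWithinAt₀

theorem EMData.unique (h : EMData D a K) {p q : E} (hseg : segment ℝ p q ⊆ D) {x y : ℝ → ℝ}
    (hx : EMSol a p q x) (hy : EMSol a p q y) (h0 : x 0 = y 0) : EqOn x y (Icc 0 1) := by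
  obtain ⟨C, hC⟩ := h.lip' hseg (|x 0| + K * ‖q - p‖)
  refine ODE_solution_unique_of_mem_Icc_right (K := C)
    (v := fun s x => a (p + s • (q - p), x) (q - p))
    (s := fun _ => closedBall 0 (|x 0| + K * ‖q - p‖)) (fun s hs => hC s (Ico_subset_Icc_self hs))
    hx.contOn (fun s hs => em_Ici (hx s (Ico_subset_Icc_self hs)) hs) ?_
    hy.contOn (fun s hs => em_Ici (hy s (Ico_subset_Icc_self hs)) hs) ?_ h0
  · intro s hs
    simpa using h.sol_bound hseg hx (Ico_subset_Icc_self hs)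
  · intro s hs
    rw [h0]
    simpa using h.sol_bound hseg hy (Ico_subset_Icc_self hs)

theorem EMData.emL_eq (h : EMData D a K) {p q : E} (hseg : segment ℝ p q ⊆ D) {x : ℝ → ℝ}
    (hx : EMSol a p q x) {t : ℝ} (ht : x 0 = t) : emL a p t q = x 1 := by
  have hex := h.exists_sol hseg t
  rw [emL, dif_pos hex]
  exact h.unique hseg hex.choose_spec.2 hx (hex.choose_spec.1.trans ht.symm)
    (right_mem_Icc.2 zero_le_one)

theorem em_scale {p q : E} {x : ℝ → ℝ} (hx : EMSol a p q x) {s : ℝ} (hs : s ∈ Icc (0:ℝ) 1) :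
    EMSol a p (p + s • (q - p)) (fun σ => x (s * σ)) := by
  intro σ hσ
  have hm : MapsTo (fun σ : ℝ => s * σ) (Icc 0 1) (Icc 0 1) := fun σ hσ =>
    ⟨mul_nonneg hs.1 hσ.1, mul_le_one₀ hs.2 hσ.1 hσ.2⟩
  have h1 : HasDerivWithinAt (fun σ : ℝ => s * σ) s (Icc 0 1) σ := by
    simpa using ((hasDerivAt_id σ).const_mul s).hasDerivWithinAt
  have h2 := (hx (s * σ) (hm hσ)).scomp σ h1 hm
  have : p + σ • (p + s • (q - p) - p) = p + (s * σ) • (q - p) := by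
    rw [add_sub_cancel_left, smul_smul, mul_comm]
  rw [this, add_sub_cancel_left, map_smul]
  exact h2

theorem EMData.emL_sol (h : EMData D a K) {p q : E} (hseg : segment ℝ p q ⊆ D) {x : ℝ → ℝ}
    (hx : EMSol a p q x) {t : ℝ} (ht : x 0 = t) {s : ℝ} (hs : s ∈ Icc (0:ℝ) 1) :
    emL a p t (p + s • (q - p)) = x s := by
  have hsub : segment ℝ p (p + s • (q - p)) ⊆ D := by
    refine subset_trans ?_ hseg
    exact (convex_segment p q).segment_subset (left_mem_segment ℝ p q) (em_seg_mem' hs)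
  have := h.emL_eq hsub (em_scale hx hs) (t := t) (by simpa using ht)
  simpa using this

theorem EMData.emL_self (h : EMData D a K) {p : E} (hp : p ∈ D) (t : ℝ) : emL a p t p = t := by
  have hseg : segment ℝ p p ⊆ D := by simpa using hp
  have : EMSol a p p (fun _ => t) := fun s hs => by
    simpa using hasDerivWithinAt_const s (Icc (0:ℝ) 1) t
  exact h.emL_eq hseg this rfl
end


section
variable {E : Type} [NormedAddCommGroup E] [NormedSpace ℝ E] {D : Set E}
    {a : E × ℝ → E →L[ℝ] ℝ} {K : ℝ}

theorem em_gronwall_lin (k ε : ℝ) : gronwallBound 0 k ε 1 = ε * gronwallBound 0 k 1 1 := by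
  unfold gronwallBound
  split_ifs <;> ring

theorem em_gronwall_nonneg (k : ℝ) (hk : 0 ≤ k) : 0 ≤ gronwallBound 0 k 1 1 := by
  have := gronwallBound_mono (δ := 0) (K := k) (ε := 1) le_rfl zero_le_one hk
    (zero_le_one : (0:ℝ) ≤ 1)
  rwa [gronwallBound_x0] at this

/-- exponential factor with its ODE -/
theorem em_exp_factor {c : ℝ → ℝ} (hc : ContinuousOn c (Icc 0 1)) :
    ∃ e : ℝ → ℝ, e 0 = 1 ∧ e 1 = Real.exp (∫ s in (0:ℝ)..1, c s) ∧ Continuous e ∧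
      ∀ s ∈ Icc (0:ℝ) 1, HasDerivAt e (c s * e s) s := by
  set C : ℝ → ℝ := IccExtend (zero_le_one : (0:ℝ) ≤ 1) ((Icc (0:ℝ) 1).restrict c) with hC
  have hCc : Continuous C := (continuousOn_iff_continuous_restrict.1 hc).Icc_extend'
  have hCe : ∀ s ∈ Icc (0:ℝ) 1, C s = c s := fun s hs => by
    rw [hC, IccExtend_of_mem _ _ hs]; rfl
  have hd : ∀ s, HasDerivAt (fun s => Real.exp (∫ σ in (0:ℝ)..s, C σ))
      (Real.exp (∫ σ in (0:ℝ)..s, C σ) * C s) s := fun s =>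
    (hCc.integral_hasStrictDerivAt 0 s).hasDerivAt.exp
  refine ⟨fun s => Real.exp (∫ σ in (0:ℝ)..s, C σ), by simp, ?_, ?_, ?_⟩
  · simp only
    congr 1
    apply intervalIntegral.integral_congr
    intro s hs
    rw [uIcc_of_le zero_le_one] at hs
    exact hCe s hs
  · exact continuous_iff_continuousAt.2 fun s => (hd s).continuousAt
  · intro s hs
    have := hd s
    rw [hCe s hs, mul_comm] at this
    exact this

set_option maxHeartbeats 2000000 in
theorem EMData.hasFDerivAt_emL [FiniteDimensional ℝ E] (h : EMData D a K) {U : Set E}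
    (hUo : IsOpen U) (hUc : Convex ℝ U) (hUD : U ⊆ D) {q p₀ : E} (hq : q ∈ U) (hp : p₀ ∈ U)
    (t₀ : ℝ) :
    HasFDerivAt (fun z : E × ℝ => emL a q z.2 z.1)
      ((a (p₀, emL a q t₀ p₀)).comp (ContinuousLinearMap.fst ℝ E ℝ) +
        (Real.exp (∫ s in (0:ℝ)..1, fderiv ℝ a (q + s • (p₀ - q),
          emL a q t₀ (q + s • (p₀ - q))) (0, 1) (p₀ - q))) • ContinuousLinearMap.snd ℝ E ℝ)
      (p₀, t₀) := by
  have hK := h.hK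
  have hsegU : ∀ p ∈ U, segment ℝ q p ⊆ U := fun p hp => hUc.segment_subset hq hp
  have hseg : ∀ p ∈ U, segment ℝ q p ⊆ D := fun p hp => (hsegU p hp).trans hUD
  obtain ⟨x, hx0, hx⟩ := h.exists_sol (hseg p₀ hp) t₀
  set u := p₀ - q with hu
  have hxe : ∀ s ∈ Icc (0:ℝ) 1, emL a q t₀ (q + s • u) = x s := fun s hs =>
    h.emL_sol (hseg p₀ hp) hx hx0 hs
  set P : ℝ → E := fun s => q + s • u with hP
  have hPD : ∀ s ∈ Icc (0:ℝ) 1, P s ∈ D := fun s hs => em_seg_mem (hseg p₀ hp) hs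
  -- the linearised coefficients
  set A : ℝ → (E × ℝ →L[ℝ] E →L[ℝ] ℝ) := fun s => fderiv ℝ a (P s, x s) with hA
  have hcurve : ContinuousOn (fun s => (P s, x s)) (Icc 0 1) :=
    ContinuousOn.prodMk (by fun_prop) hx.contOn
  have hAc : ContinuousOn A (Icc 0 1) :=
    h.contFderiv.comp hcurve (fun s hs => ⟨hPD s hs, trivial⟩)
  obtain ⟨e, he0, he1, hec, he⟩ := em_exp_factor (c := fun s => A s (0, 1) u)
    ((hAc.clm_apply continuousOn_const).clm_apply continuousOn_const)
  have he1' : Real.exp (∫ s in (0:ℝ)..1, fderiv ℝ a (q + s • u,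
          emL a q t₀ (q + s • u)) (0, 1) u) = e 1 := by
    rw [he1]
    congr 1
    apply intervalIntegral.integral_congr
    intro s hs
    rw [uIcc_of_le zero_le_one] at hs
    simp only [hxe s hs, hA, hP]
  have hx1 : emL a q t₀ p₀ = x 1 := h.emL_eq (hseg p₀ hp) hx hx0
  rw [he1', hx1]
  obtain ⟨C0, hC0⟩ := isCompact_Icc.exists_bound_of_continuousOn (s := Icc (0:ℝ) 1) hec.continuousOn
  obtain ⟨C1, hC1⟩ := isCompact_Icc.exists_bound_of_continuousOn (s := Icc (0:ℝ) 1)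
    (f := fun s => A s) hAc
  have hC0' : 0 ≤ C0 := (norm_nonneg _).trans (hC0 0 (left_mem_Icc.2 zero_le_one))
  have hC1' : 0 ≤ C1 := (norm_nonneg _).trans (hC1 0 (left_mem_Icc.2 zero_le_one))
  set C2 := 1 + K + C0 with hC2
  have hC2' : 0 < C2 := by positivity
  -- compact family of segments
  obtain ⟨ρ, hρ, hρU⟩ := Metric.nhds_basis_closedBall.mem_iff.1 (hUo.mem_nhds hp)
  set S : Set E := (fun z : ℝ × E => q + z.1 • (z.2 - q)) '' (Icc (0:ℝ) 1 ×ˢ closedBall p₀ ρ)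
    with hS
  have hSc : IsCompact S := by
    have : ProperSpace E := FiniteDimensional.proper ℝ E
    exact (isCompact_Icc.prod (isCompact_closedBall p₀ ρ)).image (by fun_prop)
  have hSD : S ⊆ D := by
    rintro _ ⟨⟨s, p⟩, ⟨hs, hp'⟩, rfl⟩
    exact em_seg_mem (hseg p (hρU hp')) hs
  set R := |t₀| + 1 + K * (‖u‖ + 1) + C2 with hR
  obtain ⟨C3, hC3⟩ := h.lip hSc hSD R
  set k : ℝ≥0 := Real.toNNReal (‖u‖ + 1) * C3 with hk
  set M := gronwallBound 0 k 1 1 with hM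
  have hM0 : 0 ≤ M := em_gronwall_nonneg k k.2
  rw [hasFDerivAt_iff_isLittleO_nhds_zero, Asymptotics.isLittleO_iff]
  intro c hc
  set η := c / (M + 1) with hη
  have hη0 : 0 < η := by positivity
  set ε := η / (2 * C2 * (‖u‖ + 1)) with hε
  have hε0 : 0 < ε := by positivity
  have hcomp : IsCompact ((fun s => (P s, x s)) '' Icc (0:ℝ) 1) := isCompact_Icc.image_of_continuousOn hcurve
  have hT := em_unif_taylor h.openProd h.c1 hcomp
    (by rintro _ ⟨s, hs, rfl⟩; exact ⟨hPD s hs, trivial⟩) hε0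
  obtain ⟨r, hr, hrT⟩ := Metric.eventually_nhds_iff.1 hT
  have hsmall : ∀ᶠ d : E × ℝ in 𝓝 0, ‖d‖ < min (min 1 ρ) (min (η / (2 * C1 * C2 + 1)) (r / C2)) := by
    have h0 : 0 < min (min 1 ρ) (min (η / (2 * C1 * C2 + 1)) (r / C2)) := by positivity
    filter_upwards [Metric.ball_mem_nhds (0 : E × ℝ) h0] with d hd
    exact mem_ball_zero_iff.1 hd
  filter_upwards [hsmall] with d hd
  obtain ⟨w, τ⟩ := d
  set δ := ‖(w, τ)‖ with hδ
  have hδ0 : 0 ≤ δ := norm_nonneg _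
  simp only [lt_min_iff] at hd
  obtain ⟨⟨hd1, hdρ⟩, hdη, hdr⟩ := hd
  have hw : ‖w‖ ≤ δ := norm_fst_le (w, τ)
  have hτ : |τ| ≤ δ := norm_snd_le (w, τ)
  have hpw : p₀ + w ∈ closedBall p₀ ρ := by simpa using hw.trans hdρ.le
  have hpwU := hρU hpw
  obtain ⟨z, hz0, hz⟩ := h.exists_sol (hseg _ hpwU) (t₀ + τ)
  have huw : p₀ + w - q = u + w := by rw [hu]; abel
  have hPw : ∀ s : ℝ, q + s • (p₀ + w - q) = P s + s • w := by
    intro s; rw [huw, hP]; simp only [smul_add]; abel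
  -- the approximate solution
  set y : ℝ → ℝ := fun s => s * a (P s, x s) w + τ * e s with hy
  have hyb : ∀ s ∈ Icc (0:ℝ) 1, |y s| ≤ (K + C0) * δ := by
    intro s hs
    have b1 : |a (P s, x s) w| ≤ K * δ := by
      refine ((a (P s, x s)).le_opNorm w).trans ?_
      have := h.bound (P s, x s) ⟨hPD s hs, trivial⟩
      gcongr
    have b2 : |e s| ≤ C0 := hC0 s hs
    calc |y s| ≤ |s * a (P s, x s) w| + |τ * e s| := abs_add_le _ _
      _ ≤ 1 * (K * δ) + δ * C0 := by
          rw [abs_mul, abs_mul, abs_of_nonneg hs.1]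
          have := hs.2
          gcongr
      _ = _ := by ring
  have hyd : ∀ s ∈ Icc (0:ℝ) 1, HasDerivWithinAt y (a (P s, x s) w + A s (s • w, y s) u)
      (Icc 0 1) s := by
    intro s hs
    have d1 : HasDerivWithinAt (fun s => (P s, x s)) (u, a (P s, x s) u) (Icc 0 1) s := by
      refine HasDerivWithinAt.prodMk ?_ (hx s hs)
      have : HasDerivAt P u s := by
        have h1 := ((hasDerivAt_id s).smul_const u).const_add q
        rw [one_smul] at h1
        exact h1
      exact this.hasDerivWithinAt
    have d2 : HasDerivWithinAt (fun s => a (P s, x s)) (A s (u, a (P s, x s) u)) (Icc 0 1) s :=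
      (h.diffAt (hPD s hs) (x s)).hasFDerivAt.comp_hasDerivWithinAt s d1
    have d3 : HasDerivWithinAt (fun s => a (P s, x s) w) (A s (u, a (P s, x s) u) w)
        (Icc 0 1) s := by
      simpa using d2.clm_apply (hasDerivWithinAt_const s _ w)
    have d4 := ((hasDerivWithinAt_id s (Icc (0:ℝ) 1)).mul d3).add
      ((he s hs).hasDerivWithinAt.const_mul τ)
    refine d4.congr_deriv ?_
    have hfl := h.flat (P s, x s) ⟨hPD s hs, trivial⟩ u w
    have hfl' : A s (u, a (P s, x s) u) w = A s (w, a (P s, x s) w) u := hfl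
    rw [hfl']
    have hdec : ((s • w, y s) : E × ℝ) = s • (w, a (P s, x s) w) + (τ * e s) • ((0:E), (1:ℝ)) := by
      simp [hy]
    rw [hdec, map_add, map_smul, map_smul]
    simp
    ring
  have hpair : ∀ s ∈ Icc (0:ℝ) 1, ‖((s • w, y s) : E × ℝ)‖ ≤ C2 * δ := by
    intro s hs
    rw [Prod.norm_mk, max_le_iff]
    constructor
    · rw [norm_smul, Real.norm_eq_abs, abs_of_nonneg hs.1]
      calc s * ‖w‖ ≤ 1 * δ := by have := hs.2; gcongr
        _ ≤ C2 * δ := by gcongr; linarith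
    · refine (hyb s hs).trans ?_
      gcongr
      linarith
  have herr : ∀ s ∈ Icc (0:ℝ) 1,
      |a (P s, x s) u + (a (P s, x s) w + A s (s • w, y s) u)
        - a (P s + s • w, x s + y s) (u + w)| ≤ η * δ := by
    intro s hs
    have hp2 := hpair s hs
    have hr' : ‖((s • w, y s) : E × ℝ)‖ < r := by
      refine hp2.trans_lt ?_
      rwa [lt_div_iff₀ hC2', mul_comm] at hdr
    have ht := hrT (y := (s • w, y s)) (by simpa using hr') (P s, x s) ⟨s, hs, rfl⟩
    set T := a ((P s, x s) + (s • w, y s)) - a (P s, x s) - fderiv ℝ a (P s, x s) (s • w, y s)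
      with hTdef
    have hident : a (P s, x s) u + (a (P s, x s) w + A s (s • w, y s) u)
        - a (P s + s • w, x s + y s) (u + w) = -(T (u + w)) - A s (s • w, y s) w := by
      have : a (P s + s • w, x s + y s) = T + a (P s, x s) + A s (s • w, y s) := by
        rw [hTdef, hA]
        simp only [Prod.mk_add_mk]
        abel
      rw [this]
      simp
      ring
    rw [hident]
    have e1 : |T (u + w)| ≤ ε * (C2 * δ) * (‖u‖ + 1) := by
      refine (T.le_opNorm _).trans ?_
      have : ‖u + w‖ ≤ ‖u‖ + 1 := (norm_add_le _ _).trans (by linarith)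
      have : ‖T‖ ≤ ε * (C2 * δ) := ht.trans (by gcongr)
      gcongr
    have e2 : |A s (s • w, y s) w| ≤ C1 * (C2 * δ) * δ := by
      refine ((A s (s • w, y s)).le_opNorm _).trans ?_
      have : ‖A s (s • w, y s)‖ ≤ C1 * (C2 * δ) := by
        refine ((A s).le_opNorm _).trans ?_
        have := hC1 s hs
        gcongr
      gcongr
    have e3 : ε * (C2 * δ) * (‖u‖ + 1) = η / 2 * δ := by
      rw [hε]; field_simp
    have e4 : C1 * (C2 * δ) * δ ≤ η / 2 * δ := by
      have : C1 * (C2 * δ) ≤ η / 2 := by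
        rw [lt_div_iff₀ (by positivity)] at hdη
        have e5 : δ * (2 * C1 * C2 + 1) = 2 * (C1 * (C2 * δ)) + δ := by ring
        linarith
      gcongr
    calc _ ≤ |-(T (u + w))| + |A s (s • w, y s) w| := abs_sub _ _
      _ ≤ η / 2 * δ + η / 2 * δ := by rw [abs_neg]; linarith
      _ = _ := by ring
  have hzb : ∀ s ∈ Icc (0:ℝ) 1, z s ∈ closedBall 0 R := by
    intro s hs
    have b := h.sol_bound (hseg _ hpwU) hz hs
    rw [hz0, huw] at b
    have b1 : |t₀ + τ| ≤ |t₀| + 1 := (abs_add_le _ _).trans (by linarith)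
    have b2 : K * ‖u + w‖ ≤ K * (‖u‖ + 1) := by
      gcongr
      exact (norm_add_le _ _).trans (by linarith)
    simp only [mem_closedBall, dist_zero_right, Real.norm_eq_abs]
    linarith
  have hxyb : ∀ s ∈ Icc (0:ℝ) 1, x s + y s ∈ closedBall 0 R := by
    intro s hs
    have b := h.sol_bound (hseg _ hp) hx hs
    rw [hx0] at b
    have b1 := hyb s hs
    have b2 : (K + C0) * δ ≤ (K + C0) * 1 := by gcongr
    have b3 := abs_add_le (x s) (y s)
    simp only [mem_closedBall, dist_zero_right, Real.norm_eq_abs]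
    have : K * ‖u‖ ≤ K * (‖u‖ + 1) := by gcongr; linarith
    linarith
  have hlip : ∀ s ∈ Ico (0:ℝ) 1, LipschitzOnWith k
      (fun ξ : ℝ => a (q + s • (p₀ + w - q), ξ) (p₀ + w - q)) (closedBall 0 R) := by
    intro s hs
    have l1 := hC3 (q + s • (p₀ + w - q)) ⟨(s, p₀ + w), ⟨Ico_subset_Icc_self hs, hpw⟩, rfl⟩
    refine LipschitzOnWith.of_dist_le_mul fun ξ hξ ζ hζ => ?_
    have l2 := l1.dist_le_mul ξ hξ ζ hζ
    rw [dist_eq_norm] at l2 ⊢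
    rw [← ContinuousLinearMap.sub_apply]
    refine (ContinuousLinearMap.le_opNorm _ _).trans ?_
    rw [hk, NNReal.coe_mul, Real.coe_toNNReal _ (by positivity), huw]
    rw [huw] at l2
    have : ‖u + w‖ ≤ ‖u‖ + 1 := (norm_add_le _ _).trans (by linarith)
    calc _ ≤ (C3 * dist ξ ζ) * (‖u‖ + 1) := by gcongr
      _ = _ := by ring
  have hxyd : ∀ s ∈ Icc (0:ℝ) 1, HasDerivWithinAt (fun s => x s + y s)
      (a (P s, x s) u + (a (P s, x s) w + A s (s • w, y s) u)) (Icc 0 1) s :=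
    fun s hs => (hx s hs).add (hyd s hs)
  have hG := dist_le_of_approx_trajectories_ODE_of_mem (K := k) (a := 0) (b := 1)
    (v := fun s ξ => a (q + s • (p₀ + w - q), ξ) (p₀ + w - q)) (s := fun _ => closedBall 0 R)
    (f := z) (g := fun s => x s + y s) (εf := 0) (εg := η * δ) (δ := 0)
    hlip hz.contOn (fun s hs => em_Ici (hz s (Ico_subset_Icc_self hs)) hs)
    (fun s hs => by simp) (fun s hs => hzb s (Ico_subset_Icc_self hs))
    (fun s hs => (hxyd s hs).continuousWithinAt)
    (fun s hs => em_Ici (hxyd s (Ico_subset_Icc_self hs)) hs)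
    (fun s hs => by
      rw [hPw, huw, Real.dist_eq]
      exact herr s (Ico_subset_Icc_self hs))
    (fun s hs => hxyb s (Ico_subset_Icc_self hs))
    (by simp [hz0, hx0, hy, he0]) 1 (right_mem_Icc.2 zero_le_one)
  rw [sub_zero, zero_add, em_gronwall_lin, Real.dist_eq] at hG
  have hz1 : emL a q (t₀ + τ) (p₀ + w) = z 1 := h.emL_eq (hseg _ hpwU) hz hz0
  have hP1 : P 1 = p₀ := by simp [hP, hu]
  simp only [Prod.mk_add_mk, hz1, hx1, Real.norm_eq_abs]
  simp only [hy, hP1] at hG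
  have hfin : η * δ * M ≤ c * δ := by
    have : η * M ≤ c := by
      rw [hη, div_mul_eq_mul_div, div_le_iff₀ (by positivity)]
      have : c * (M + 1) = c * M + c := by ring
      linarith
    calc η * δ * M = η * M * δ := by ring
      _ ≤ c * δ := by gcongr
  refine le_trans (le_of_eq ?_) (hG.trans hfin)
  congr 1
  simp
  ring
end


section
variable {E : Type} [NormedAddCommGroup E] [NormedSpace ℝ E] {D : Set E}
    {a : E × ℝ → E →L[ℝ] ℝ} {K : ℝ}

theorem EMData.hasDerivAt_curve [FiniteDimensional ℝ E] (h : EMData D a K) {U : Set E}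
    (hUo : IsOpen U) (hUc : Convex ℝ U) (hUD : U ⊆ D) {q y w : E} (hq : q ∈ U) {s : ℝ}
    (hy : y + s • w ∈ U) (t : ℝ) :
    HasDerivAt (fun σ : ℝ => emL a q t (y + σ • w))
      (a (y + s • w, emL a q t (y + s • w)) w) s := by
  have h1 := h.hasFDerivAt_emL hUo hUc hUD hq hy t
  have h2 : HasDerivAt (fun σ : ℝ => (y + σ • w, t)) (w, (0:ℝ)) s := by
    refine HasDerivAt.prodMk ?_ (hasDerivAt_const s t)
    have h1 := ((hasDerivAt_id s).smul_const w).const_add y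
    rw [one_smul] at h1
    exact h1
  have h3 := h1.comp_hasDerivAt s h2
  refine h3.congr_deriv ?_
  simp

theorem EMData.cocycle [FiniteDimensional ℝ E] (h : EMData D a K) {U : Set E}
    (hUo : IsOpen U) (hUc : Convex ℝ U) (hUD : U ⊆ D) {p y z : E} (hp : p ∈ U) (hy : y ∈ U)
    (hz : z ∈ U) (t : ℝ) : emL a y (emL a p t y) z = emL a p t z := by
  have hseg : segment ℝ y z ⊆ U := hUc.segment_subset hy hz
  have := h.emL_eq (p := y) (q := z) (x := fun σ => emL a p t (y + σ • (z - y)))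
    (t := emL a p t y) (hseg.trans hUD) ?_ (by simp)
  · rw [this]; simp
  · intro s hs
    exact (h.hasDerivAt_curve hUo hUc hUD hp (em_seg_mem hseg hs) t).hasDerivWithinAt

theorem EMData.contDiffOn_emL_nat [FiniteDimensional ℝ E] (h : EMData D a K) {U : Set E}
    (hUo : IsOpen U) (hUc : Convex ℝ U) (hUD : U ⊆ D) {q : E} (hq : q ∈ U) (k : ℕ)
    (ha : ContDiffOn ℝ k a (D ×ˢ univ)) :
    ContDiffOn ℝ k (fun z : E × ℝ => emL a q z.2 z.1) (U ×ˢ univ) := by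
  have hd : ∀ z ∈ U ×ˢ (univ : Set ℝ), _ := fun z hz =>
    h.hasFDerivAt_emL hUo hUc hUD hq (p₀ := z.1) hz.1 z.2
  have hUo' : IsOpen (U ×ˢ (univ : Set ℝ)) := hUo.prod isOpen_univ
  induction k with
  | zero =>
    simp only [Nat.cast_zero, contDiffOn_zero]
    exact fun z hz => (hd z hz).continuousAt.continuousWithinAt
  | succ k ih =>
    have ih' := ih (ha.of_le (by exact_mod_cast Nat.le_succ k))
    have hfa : ContDiffOn ℝ k (fderiv ℝ a) (D ×ˢ univ) :=
      ha.fderiv_of_isOpen h.openProd (by norm_cast)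
    rw [Nat.cast_add, Nat.cast_one, contDiffOn_succ_iff_fderiv_of_isOpen hUo']
    refine ⟨fun z hz => (hd z hz).differentiableAt.differentiableWithinAt,
      fun hω => by simp at hω, ?_⟩
    refine ContDiffOn.congr ?_ (fun z hz => (hd z hz).fderiv)
    refine ContDiffOn.add ?_ ?_
    · refine ContDiffOn.clm_comp ?_ contDiffOn_const
      refine (ha.of_le (by exact_mod_cast Nat.le_succ k)).comp (contDiffOn_fst.prodMk ih') ?_
      exact fun z hz => ⟨hUD hz.1, trivial⟩
    · suffices hs : ContDiffOn ℝ k (fun z : E × ℝ => Real.exp (∫ s in (0:ℝ)..1,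
          fderiv ℝ a (q + s • (z.1 - q), emL a q z.2 (q + s • (z.1 - q))) (0, 1) (z.1 - q)))
          (U ×ˢ univ) from hs.smul contDiffOn_const
      refine ContDiffOn.exp ?_
      set W : Set (ℝ × (E × ℝ)) := {θ | q + θ.1 • (θ.2.1 - q) ∈ U} with hW
      have hWo : IsOpen W := hUo.preimage (by fun_prop)
      have hmap : ContDiff ℝ k (fun θ : ℝ × (E × ℝ) => q + θ.1 • (θ.2.1 - q)) := by fun_prop
      refine em_param_contDiff k hWo (G := fun θ => fderiv ℝ a (q + θ.1 • (θ.2.1 - q),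
          emL a q θ.2.2 (q + θ.1 • (θ.2.1 - q))) (0, 1) (θ.2.1 - q)) ?_ hUo' ?_
      · refine ContDiffOn.clm_apply (ContDiffOn.clm_apply ?_ contDiffOn_const) (by fun_prop)
        refine hfa.comp (t := D ×ˢ univ) (ContDiffOn.prodMk hmap.contDiffOn ?_) (fun θ hθ => ⟨hUD hθ, trivial⟩)
        exact ih'.comp (f := fun θ : ℝ × (E × ℝ) => (q + θ.1 • (θ.2.1 - q), θ.2.2))
          (hmap.prodMk (by fun_prop)).contDiffOn (fun θ hθ => ⟨hθ, trivial⟩)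
      · intro θ hθ s hs
        exact em_seg_mem (hUc.segment_subset hq hθ.1) hs

theorem em_contDiffOn_of_nat {G F : Type} [NormedAddCommGroup G] [NormedSpace ℝ G]
    [NormedAddCommGroup F] [NormedSpace ℝ F] {f : G → F} {s : Set G} {r : ℕ∞}
    (hf : ∀ k : ℕ, (k : ℕ∞) ≤ r → ContDiffOn ℝ k f s) : ContDiffOn ℝ r f s := by
  intro x hx m hm
  have : (m : WithTop ℕ∞) ≤ r := by exact_mod_cast hm
  exact hf m (by exact_mod_cast this) x hx m le_rfl

theorem EMData.contDiffOn_emL [FiniteDimensional ℝ E] (h : EMData D a K) {U : Set E}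
    (hUo : IsOpen U) (hUc : Convex ℝ U) (hUD : U ⊆ D) {q : E} (hq : q ∈ U) {r : ℕ∞}
    (ha : ContDiffOn ℝ r a (D ×ˢ univ)) :
    ContDiffOn ℝ r (fun z : E × ℝ => emL a q z.2 z.1) (U ×ˢ univ) :=
  em_contDiffOn_of_nat fun k hk =>
    h.contDiffOn_emL_nat hUo hUc hUD hq k (ha.of_le (by exact_mod_cast hk))
end


section
variable {E : Type} [NormedAddCommGroup E] [NormedSpace ℝ E] {D : Set E}
    {a : E × ℝ → E →L[ℝ] ℝ} {K : ℝ}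

noncomputable def emEquiv (A : E →L[ℝ] ℝ) (c : ℝ) (hc : c ≠ 0) : (E × ℝ) ≃L[ℝ] (E × ℝ) :=
  ContinuousLinearEquiv.equivOfInverse
    ((ContinuousLinearMap.fst ℝ E ℝ).prod
      (A.comp (ContinuousLinearMap.fst ℝ E ℝ) + c • ContinuousLinearMap.snd ℝ E ℝ))
    ((ContinuousLinearMap.fst ℝ E ℝ).prod
      (c⁻¹ • (ContinuousLinearMap.snd ℝ E ℝ - A.comp (ContinuousLinearMap.fst ℝ E ℝ))))
    (fun z => by ext <;> simp [hc]) (fun z => by ext <;> simp [hc])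

theorem emEquiv_coe (A : E →L[ℝ] ℝ) (c : ℝ) (hc : c ≠ 0) :
    (emEquiv A c hc : (E × ℝ) →L[ℝ] (E × ℝ)) = (ContinuousLinearMap.fst ℝ E ℝ).prod
      (A.comp (ContinuousLinearMap.fst ℝ E ℝ) + c • ContinuousLinearMap.snd ℝ E ℝ) := by
  ext <;> simp [emEquiv]

theorem EMData.contDiffOn_emL_inv [FiniteDimensional ℝ E] (h : EMData D a K) {U : Set E}
    (hUo : IsOpen U) (hUc : Convex ℝ U) (hUD : U ⊆ D) {q : E} (hq : q ∈ U) {r : ℕ∞}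
    (hr : 1 ≤ r) (ha : ContDiffOn ℝ r a (D ×ˢ univ)) :
    ContDiffOn ℝ r (fun z : E × ℝ => emL a z.1 z.2 q) (U ×ˢ univ) := by
  have hUo' : IsOpen (U ×ˢ (univ : Set ℝ)) := hUo.prod isOpen_univ
  have hr0 : (r : WithTop ℕ∞) ≠ 0 := by
    intro h0
    have h1 : r = 0 := by exact_mod_cast h0
    rw [h1] at hr
    simp at hr
  rintro ⟨p₀, t₀⟩ ⟨hp₀, -⟩
  set τ₀ := emL a p₀ t₀ q with hτ₀
  have hτ : emL a q τ₀ p₀ = t₀ := by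
    rw [hτ₀, h.cocycle hUo hUc hUD hp₀ hq hp₀, h.emL_self (hUD hp₀)]
  set Θ : E × ℝ → E × ℝ := fun z => (z.1, emL a q z.2 z.1) with hΘ
  have hΘ0 : Θ (p₀, τ₀) = (p₀, t₀) := by simp [hΘ, hτ]
  have hΘc : ContDiffAt ℝ r Θ (p₀, τ₀) :=
    contDiffAt_fst.prodMk ((h.contDiffOn_emL hUo hUc hUD hq ha).contDiffAt
      (hUo'.mem_nhds ⟨hp₀, trivial⟩))
  obtain ⟨A, c, hc, hd⟩ : ∃ (A : E →L[ℝ] ℝ) (c : ℝ), c ≠ 0 ∧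
      HasFDerivAt (fun z : E × ℝ => emL a q z.2 z.1)
        (A.comp (ContinuousLinearMap.fst ℝ E ℝ) + c • ContinuousLinearMap.snd ℝ E ℝ) (p₀, τ₀) :=
    ⟨_, _, Real.exp_ne_zero _, h.hasFDerivAt_emL hUo hUc hUD hq hp₀ τ₀⟩
  have hΘd : HasFDerivAt Θ (emEquiv A c hc : (E × ℝ) →L[ℝ] (E × ℝ)) (p₀, τ₀) := by
    rw [emEquiv_coe]
    exact hasFDerivAt_fst.prodMk hd
  have hinv := hΘc.to_localInverse hΘd hr0
  have hright := (hΘc.hasStrictFDerivAt' hΘd hr0).eventually_right_inverse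
  have hleft := hΘc.localInverse_apply_image hΘd hr0
  rw [hΘ0] at hinv hright hleft
  refine ContDiffAt.contDiffWithinAt ?_
  refine (contDiffAt_snd.comp _ hinv).congr_of_eventuallyEq ?_
  filter_upwards [hright, hUo'.mem_nhds (show (p₀, t₀) ∈ U ×ˢ (univ : Set ℝ) from ⟨hp₀, trivial⟩)]
    with z hz hzU
  change Θ (hΘc.localInverse hΘd hr0 z) = z at hz
  set g := hΘc.localInverse hΘd hr0 z with hg
  have h1 : (Θ g).1 = z.1 := by rw [hz]
  change g.1 = z.1 at h1
  have h2 : (Θ g).2 = z.2 := by rw [hz]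
  change emL a q g.2 g.1 = z.2 at h2
  rw [h1] at h2
  change emL a z.1 z.2 q = g.2
  rw [← h2, h.cocycle hUo hUc hUD hq hzU.1 hq, h.emL_self (hUD hq)]
end


section
variable {E : Type} [NormedAddCommGroup E] [NormedSpace ℝ E] {D : Set E}
    {a : E × ℝ → E →L[ℝ] ℝ} {K : ℝ}

theorem EMData.core [FiniteDimensional ℝ E] (h : EMData D a K) [SimplyConnectedSpace D]
    (p₀ : D) {r : ℕ∞} (hr : 1 ≤ r) (ha : ContDiffOn ℝ r a (D ×ˢ univ)) :
    ∃ f : E × ℝ → ℝ, ContDiffOn ℝ r f (D ×ˢ univ) ∧ ∀ z ∈ D ×ˢ (univ : Set ℝ),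
      fderiv ℝ f z (0, 1) ≠ 0 ∧ ∀ w, fderiv ℝ f z (w, a z w) = 0 := by
  have hr0 : (r : WithTop ℕ∞) ≠ 0 := by
    intro h0
    have h1 : r = 0 := by exact_mod_cast h0
    rw [h1] at hr
    simp at hr
  have : LocallyPathConnectedSpace D := h.isOpen.locallyPathConnectedSpace
  have hball : ∀ x : D, ∃ ε > 0, ball (x : E) ε ⊆ D := fun x =>
    Metric.isOpen_iff.1 h.isOpen x x.2
  choose ε hε hεD using hball
  set U : D → Set E := fun x => ball (x : E) (ε x) with hU
  have hUo : ∀ x, IsOpen (U x) := fun x => isOpen_ball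
  have hUc : ∀ x, Convex ℝ (U x) := fun x => convex_ball _ _
  have hUm : ∀ x : D, (x : E) ∈ U x := fun x => mem_ball_self (hε x)
  obtain ⟨f, hf0, hf⟩ := em_monodromy (X := D) (F := ℝ) (fun x => Subtype.val ⁻¹' U x)
    (fun x => (hUo x).preimage continuous_subtype_val) hUm
    (fun x => by
      rw [← IsInducing.subtypeVal.isPreconnected_image, Subtype.image_preimage_coe,
        inter_eq_right.2 (hεD x)]
      exact (hUc x).isPreconnected)
    (fun x τ y => emL a x τ y) (fun x τ => h.emL_self x.2 τ)
    (fun i x hx y hy z hz τ => h.cocycle (hUo i) (hUc i) (hεD i) hx hy hz τ) p₀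
  -- good fibres
  set Good : D → Prop := fun x => ContDiff ℝ r (f x) ∧ ∀ t, deriv (f x) t ≠ 0 with hGood
  have hstep : ∀ i x y : D, (x : E) ∈ U i → (y : E) ∈ U i → Good y → Good x := by
    intro i x y hx hy ⟨hg1, hg2⟩
    have hfx : f x = fun τ => f y (emL a x τ y) := funext fun τ => (hf i x hx y hy τ).symm
    have hc : ContDiff ℝ r (fun τ : ℝ => emL a (x : E) τ (y : E)) := by
      rw [← contDiffOn_univ]
      exact (h.contDiffOn_emL (hUo i) (hUc i) (hεD i) hx ha).comp
        (f := fun τ : ℝ => ((y : E), τ)) (contDiff_const.prodMk contDiff_id).contDiffOn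
        (fun τ _ => ⟨hy, trivial⟩)
    refine ⟨by rw [hfx]; exact hg1.comp hc, fun t => ?_⟩
    have h1 := (h.hasFDerivAt_emL (hUo i) (hUc i) (hεD i) hx hy t).comp_hasDerivAt t
      ((hasDerivAt_const t (y : E)).prodMk (hasDerivAt_id t))
    have h2 := ((hg1.differentiable hr0) (emL a x t y)).hasDerivAt.comp t h1
    rw [hfx]
    have h3 := h2.deriv
    refine ne_of_eq_of_ne h3 ?_
    simp [hg2, Real.exp_ne_zero]
  have hlc : IsLocallyConstant Good := by
    rw [IsLocallyConstant.iff_eventually_eq]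
    intro x
    filter_upwards [((hUo x).preimage continuous_subtype_val).mem_nhds (hUm x)] with y hy
    exact propext ⟨hstep x x y (hUm x) hy, hstep x y x hy (hUm x)⟩
  have hgood : ∀ x, Good x := by
    intro x
    rw [hlc.apply_eq_of_preconnectedSpace x p₀]
    have : f p₀ = id := funext hf0
    refine ⟨by rw [this]; exact contDiff_id, fun t => by rw [this]; simp⟩
  classical
  set F : E × ℝ → ℝ := fun z => if hz : z.1 ∈ D then f ⟨z.1, hz⟩ z.2 else 0 with hF
  have hFe : ∀ (x : D) t, F ((x : E), t) = f x t := fun x t => by simp [hF]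
  have hcd : ∀ z ∈ D ×ˢ (univ : Set ℝ), ContDiffAt ℝ r F z := by
    rintro ⟨p, t⟩ ⟨hp, -⟩
    set q : D := ⟨p, hp⟩
    have hO : U q ×ˢ (univ : Set ℝ) ∈ 𝓝 (p, t) :=
      ((hUo q).prod isOpen_univ).mem_nhds ⟨hUm q, trivial⟩
    have h1 := ((h.contDiffOn_emL_inv (hUo q) (hUc q) (hεD q) (hUm q) hr ha).contDiffAt hO)
    refine ((hgood q).1.contDiffAt.comp (p, t) h1).congr_of_eventuallyEq ?_
    filter_upwards [hO] with z hz
    have := hf q ⟨z.1, hεD q hz.1⟩ hz.1 q (hUm q) z.2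
    change F z = f q (emL a z.1 z.2 (q : E))
    rw [this]
    exact hFe ⟨z.1, hεD q hz.1⟩ z.2
  refine ⟨F, fun z hz => (hcd z hz).contDiffWithinAt, ?_⟩
  rintro ⟨p, t⟩ hz
  have hdF := ((hcd (p, t) hz).differentiableAt hr0).hasFDerivAt
  set q : D := ⟨p, hz.1⟩ with hq
  constructor
  · have h1 := hdF.comp_hasDerivAt t ((hasDerivAt_const t p).prodMk (hasDerivAt_id t))
    have h2 : F ∘ (Prod.mk p) = f q := funext fun τ => hFe q τ
    rw [h2] at h1
    rw [← h1.deriv]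
    exact (hgood q).2 t
  · intro w
    have h1 := h.hasDerivAt_curve (hUo q) (hUc q) (hεD q) (q := p) (y := p) (w := w) (hUm q)
      (s := 0) (by simpa using hUm q) t
    simp only [zero_smul, add_zero, h.emL_self hz.1] at h1
    have h2 : HasDerivAt (fun σ : ℝ => p + σ • w) w 0 := by
      have h1 := ((hasDerivAt_id (0:ℝ)).smul_const w).const_add p
      rw [one_smul] at h1
      exact h1
    have h3 := HasFDerivAt.comp_hasDerivAt_of_eq (0:ℝ) hdF (h2.prodMk h1)
      (by simp [h.emL_self hz.1])
    have h4 : (F ∘ fun σ : ℝ => (p + σ • w, emL a p t (p + σ • w))) =ᶠ[𝓝 0] fun _ => f q t := by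
      have : ∀ᶠ σ : ℝ in 𝓝 0, p + σ • w ∈ U q :=
        h2.continuousAt.eventually_mem ((hUo q).mem_nhds (by simpa using hUm q))
      filter_upwards [this] with σ hσ
      have := hf q q (hUm q) ⟨p + σ • w, hεD q hσ⟩ hσ t
      exact (hFe ⟨p + σ • w, hεD q hσ⟩ _).trans this
    exact h3.unique ((hasDerivAt_const (0:ℝ) (f q t)).congr_of_eventuallyEq h4)
end


theorem em_alg {m : ℕ} (V X Y : Fin m → ℝ) (B : Fin m → Fin m → ℝ) (l : Fin m) (hl : V l ≠ 0)
    (hint : ∀ j k, V l * (B j k - B k j) - V j * (B l k - B k l) + V k * (B l j - B j l) = 0)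
    (hX : ∑ k, V k * X k = 0) (hY : ∑ k, V k * Y k = 0) :
    ∑ k, Y k * ∑ j, X j * B j k = ∑ k, X k * ∑ j, Y j * B j k := by
  apply mul_left_cancel₀ hl
  rw [← sub_eq_zero]
  have h2 : ∑ k, X k * ∑ j, Y j * B j k = ∑ k, ∑ j, Y k * X j * B k j := by
    simp only [Finset.mul_sum]
    rw [Finset.sum_comm]
    exact Finset.sum_congr rfl fun _ _ => Finset.sum_congr rfl fun _ _ => by ring
  have h3 : V l * ∑ k, Y k * ∑ j, X j * B j k - V l * ∑ k, X k * ∑ j, Y j * B j k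
      = ∑ k, ∑ j, (Y k * (B l k - B k l) * (V j * X j) - (V k * Y k) * (X j * (B l j - B j l))) := by
    rw [h2]
    simp only [Finset.mul_sum, ← Finset.sum_sub_distrib]
    refine Finset.sum_congr rfl fun k _ => Finset.sum_congr rfl fun j _ => ?_
    linear_combination (X j * Y k) * hint j k
  rw [h3]
  simp only [Finset.sum_sub_distrib, ← Finset.mul_sum, ← Finset.sum_mul, hX, hY]
  simp

noncomputable def emPr (n : ℕ) : (Fin (n + 1) → ℝ) →L[ℝ] (Fin n → ℝ) × ℝ :=
  (ContinuousLinearMap.pi fun i : Fin n =>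
    ContinuousLinearMap.proj (R := ℝ) (φ := fun _ : Fin (n + 1) => ℝ) i.castSucc).prod
    (ContinuousLinearMap.proj (R := ℝ) (φ := fun _ : Fin (n + 1) => ℝ) (Fin.last n))

noncomputable def emJ (n : ℕ) : (Fin n → ℝ) × ℝ →L[ℝ] (Fin (n + 1) → ℝ) :=
  ContinuousLinearMap.pi fun k : Fin (n + 1) =>
    Fin.lastCases (motive := fun _ => (Fin n → ℝ) × ℝ →L[ℝ] ℝ)
      (ContinuousLinearMap.snd ℝ (Fin n → ℝ) ℝ)
      (fun i => (ContinuousLinearMap.proj (R := ℝ) (φ := fun _ : Fin n => ℝ) i).comp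
        (ContinuousLinearMap.fst ℝ (Fin n → ℝ) ℝ)) k

theorem emJ_last (n : ℕ) (z) : emJ n z (Fin.last n) = z.2 := by simp [emJ]
theorem emJ_castSucc (n : ℕ) (z) (i : Fin n) : emJ n z i.castSucc = z.1 i := by simp [emJ]
theorem emPr_fst (n : ℕ) (x) : (emPr n x).1 = fun i : Fin n => x i.castSucc := by
  ext i; simp [emPr]
theorem emPr_snd (n : ℕ) (x) : (emPr n x).2 = x (Fin.last n) := by simp [emPr]
theorem emJ_emPr (n : ℕ) (x) : emJ n (emPr n x) = x := by
  ext k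
  refine Fin.lastCases ?_ (fun i => ?_) k
  · rw [emJ_last, emPr_snd]
  · rw [emJ_castSucc, emPr_fst]

noncomputable def emA {n : ℕ} (v : (Fin (n + 1) → ℝ) → (Fin (n + 1) → ℝ)) (z : (Fin n → ℝ) × ℝ) :
    (Fin n → ℝ) →L[ℝ] ℝ :=
  ∑ i : Fin n, (-(v (emJ n z) i.castSucc / v (emJ n z) (Fin.last n))) •
    ContinuousLinearMap.proj (R := ℝ) (φ := fun _ : Fin n => ℝ) i

theorem emA_apply {n : ℕ} (v : (Fin (n + 1) → ℝ) → (Fin (n + 1) → ℝ)) (z : (Fin n → ℝ) × ℝ)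
    (hl : v (emJ n z) (Fin.last n) ≠ 0) (w : Fin n → ℝ) :
    v (emJ n z) (Fin.last n) * emA v z w + ∑ i : Fin n, v (emJ n z) i.castSucc * w i = 0 := by
  simp only [emA, sum_apply, smul_apply, ContinuousLinearMap.proj_apply,
    smul_eq_mul, Finset.mul_sum, ← Finset.sum_add_distrib]
  refine Finset.sum_eq_zero fun i _ => ?_
  field_simp
  ring

theorem em_lin_expand {m : ℕ} (T : (Fin m → ℝ) →L[ℝ] (Fin m → ℝ)) (X : Fin m → ℝ) (k : Fin m) :
    T X k = ∑ j, X j * T (Pi.single j 1) k := by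
  conv_lhs => rw [pi_eq_sum_univ' X]
  simp [Finset.sum_apply]

theorem em_main
    (n : ℕ)
    (D : Set (Fin n → ℝ)) (hDopen : IsOpen D) (hDconn : IsConnected D)
    (hDsc : SimplyConnectedSpace D)
    (r : ℕ∞) (hr : 1 ≤ r)
    (v : (Fin (n + 1) → ℝ) → (Fin (n + 1) → ℝ))
    (M : Set (Fin (n + 1) → ℝ)) (hM : M = {x | (fun i : Fin n => x i.castSucc) ∈ D})
    (hv : ContDiffOn ℝ (r : WithTop ℕ∞) v M)
    (hvlast : ∀ x ∈ M, v x (Fin.last n) ≠ 0)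
    (hbound : ∃ C : ℝ, 0 < C ∧ ∀ x ∈ M, ∀ i : Fin n,
      |v x i.castSucc| ≤ C * |v x (Fin.last n)|)
    (hint : ∀ x ∈ M, ∀ i j k : Fin (n + 1),
      v x i * (fderiv ℝ v x (Pi.single j 1) k - fderiv ℝ v x (Pi.single k 1) j)
        - v x j * (fderiv ℝ v x (Pi.single i 1) k - fderiv ℝ v x (Pi.single k 1) i)
        + v x k * (fderiv ℝ v x (Pi.single i 1) j - fderiv ℝ v x (Pi.single j 1) i)
        = 0) :
    ∃ (f : (Fin (n + 1) → ℝ) → ℝ) (lam : (Fin (n + 1) → ℝ) → ℝ),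
      ContDiffOn ℝ (r : WithTop ℕ∞) f M ∧
      ContDiffOn ℝ ((r - 1 : ℕ∞) : WithTop ℕ∞) lam M ∧
      (∀ x ∈ M, lam x ≠ 0) ∧
      ∀ x ∈ M, ∀ u : Fin (n + 1) → ℝ,
        fderiv ℝ f x u = lam x * ∑ k, v x k * u k := by
  obtain ⟨C, hC, hb⟩ := hbound
  have hr1 : (1 : WithTop ℕ∞) ≤ r := by exact_mod_cast hr
  have hr0 : (r : WithTop ℕ∞) ≠ 0 := by
    intro h0
    rw [h0] at hr1
    simp at hr1
  have hMo : IsOpen M := by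
    rw [hM]
    exact hDopen.preimage (f := fun (x : Fin (n + 1) → ℝ) (i : Fin n) => x i.castSucc) (by fun_prop)
  have hJ : ∀ z ∈ D ×ˢ (univ : Set ℝ), emJ n z ∈ M := by
    intro z hz
    rw [hM]
    simp only [mem_setOf_eq, emJ_castSucc]
    exact hz.1
  have hPr : ∀ x ∈ M, emPr n x ∈ D ×ˢ (univ : Set ℝ) := by
    intro x hx
    rw [hM] at hx
    refine ⟨?_, trivial⟩
    rw [emPr_fst]; exact hx
  have hDo' : IsOpen (D ×ˢ (univ : Set ℝ)) := hDopen.prod isOpen_univ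
  have hvJ : ContDiffOn ℝ r (fun z => v (emJ n z)) (D ×ˢ (univ : Set ℝ)) :=
    hv.comp (emJ n).contDiff.contDiffOn hJ
  have hvJk : ∀ k, ContDiffOn ℝ r (fun z => v (emJ n z) k) (D ×ˢ (univ : Set ℝ)) :=
    fun k => contDiffOn_pi.1 hvJ k
  have hA : ContDiffOn ℝ r (emA v) (D ×ˢ (univ : Set ℝ)) := by
    unfold emA
    refine ContDiffOn.sum fun i _ => ?_
    have : ContDiffOn ℝ r (fun z => -(v (emJ n z) i.castSucc / v (emJ n z) (Fin.last n)))
        (D ×ˢ (univ : Set ℝ)) :=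
      ((hvJk i.castSucc).div (hvJk (Fin.last n)) (fun z hz => hvlast _ (hJ z hz))).neg
    exact this.smul contDiffOn_const
  have hdA : ∀ z ∈ D ×ˢ (univ : Set ℝ), ∀ d w,
      v (emJ n z) (Fin.last n) * fderiv ℝ (emA v) z d w =
        - ∑ k, emJ n (w, emA v z w) k * fderiv ℝ v (emJ n z) (emJ n d) k := by
    intro z hz d w
    have hdv : DifferentiableAt ℝ v (emJ n z) :=
      (hv.contDiffAt (hMo.mem_nhds (hJ z hz))).differentiableAt hr0
    have hda : DifferentiableAt ℝ (emA v) z :=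
      (hA.contDiffAt (hDo'.mem_nhds hz)).differentiableAt hr0
    have hcurve : HasDerivAt (fun s : ℝ => z + s • d) d 0 := by
      have h1 := ((hasDerivAt_id (0:ℝ)).smul_const d).const_add z
      rw [one_smul] at h1
      exact h1
    have h1 : HasDerivAt (fun s : ℝ => v (emJ n (z + s • d))) (fderiv ℝ v (emJ n z) (emJ n d)) 0 :=
      HasFDerivAt.comp_hasDerivAt_of_eq (0:ℝ) hdv.hasFDerivAt
        ((emJ n).hasFDerivAt.comp_hasDerivAt (0:ℝ) hcurve) (by simp)
    have h1k := hasDerivAt_pi.1 h1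
    have h2 : HasDerivAt (fun s : ℝ => emA v (z + s • d)) (fderiv ℝ (emA v) z d) 0 :=
      HasFDerivAt.comp_hasDerivAt_of_eq (0:ℝ) hda.hasFDerivAt hcurve (by simp)
    have h2w : HasDerivAt (fun s : ℝ => emA v (z + s • d) w) (fderiv ℝ (emA v) z d w) 0 := by
      simpa using h2.clm_apply (hasDerivAt_const (0:ℝ) w)
    have h3 := ((h1k (Fin.last n)).mul h2w).add
      (HasDerivAt.fun_sum (u := Finset.univ) fun (i : Fin n) _ => (h1k i.castSucc).mul_const (w i))
    have h4 : (fun s : ℝ => v (emJ n (z + s • d)) (Fin.last n) * emA v (z + s • d) w +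
        ∑ i : Fin n, v (emJ n (z + s • d)) i.castSucc * w i) =ᶠ[𝓝 0] fun _ => 0 := by
      have : ∀ᶠ s : ℝ in 𝓝 0, z + s • d ∈ D ×ˢ (univ : Set ℝ) :=
        hcurve.continuousAt.eventually_mem (hDo'.mem_nhds (by simpa using hz))
      filter_upwards [this] with s hs
      exact emA_apply v _ (hvlast _ (hJ _ hs)) w
    have h5 := h3.unique ((hasDerivAt_const (0:ℝ) (0:ℝ)).congr_of_eventuallyEq h4)
    simp only [zero_smul, add_zero] at h5
    rw [Fin.sum_univ_castSucc]
    simp only [emJ_castSucc, emJ_last]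
    have h6 : ∑ i : Fin n, fderiv ℝ v (emJ n z) (emJ n d) i.castSucc * w i =
      ∑ i : Fin n, w i * fderiv ℝ v (emJ n z) (emJ n d) i.castSucc :=
      Finset.sum_congr rfl fun i _ => mul_comm _ _
    rw [h6] at h5
    linarith
  have hker : ∀ z ∈ D ×ˢ (univ : Set ℝ), ∀ w, ∑ k, v (emJ n z) k * emJ n (w, emA v z w) k = 0 := by
    intro z hz w
    rw [Fin.sum_univ_castSucc]
    simp only [emJ_castSucc, emJ_last]
    rw [add_comm]
    exact emA_apply v z (hvlast _ (hJ z hz)) w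
  have hdata : EMData D (emA v) (n * C) :=
    { isOpen := hDopen
      c1 := hA.of_le hr1
      hK := by positivity
      bound := by
        intro z hz
        unfold emA
        refine (norm_sum_le _ _).trans ?_
        have : ∀ i ∈ (Finset.univ : Finset (Fin n)),
            ‖(-(v (emJ n z) i.castSucc / v (emJ n z) (Fin.last n))) •
              ContinuousLinearMap.proj (R := ℝ) (φ := fun _ : Fin n => ℝ) i‖ ≤ C := by
          intro i _
          refine ContinuousLinearMap.opNorm_le_bound _ hC.le fun w => ?_
          rw [smul_apply, norm_smul, norm_neg, norm_div, Real.norm_eq_abs, Real.norm_eq_abs]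
          have h1 := hb _ (hJ z hz) i
          have h2 : 0 < |v (emJ n z) (Fin.last n)| := abs_pos.2 (hvlast _ (hJ z hz))
          have h3 : |v (emJ n z) i.castSucc| / |v (emJ n z) (Fin.last n)| ≤ C := by
            rwa [div_le_iff₀ h2]
          have h4 : ‖(ContinuousLinearMap.proj (R := ℝ) (φ := fun _ : Fin n => ℝ) i) w‖ ≤ ‖w‖ :=
            norm_le_pi_norm w i
          gcongr
        refine (Finset.sum_le_card_nsmul _ _ C this).trans ?_
        simp
      flat := by
        intro z hz u w
        have hl := hvlast _ (hJ z hz)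
        apply mul_left_cancel₀ hl
        rw [hdA z hz, hdA z hz, neg_inj]
        refine (Finset.sum_congr rfl fun k _ => congrArg _ (em_lin_expand _ _ k)).trans (Eq.trans ?_
          (Finset.sum_congr rfl fun k _ => congrArg _ (em_lin_expand _ _ k).symm))
        exact em_alg (v (emJ n z)) (emJ n (u, emA v z u)) (emJ n (w, emA v z w))
          (fun j k => fderiv ℝ v (emJ n z) (Pi.single j 1) k) (Fin.last n) hl
          (fun j k => hint _ (hJ z hz) (Fin.last n) j k) (hker z hz u) (hker z hz w) }
  obtain ⟨p₀, hp₀⟩ := hDconn.nonempty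
  obtain ⟨f, hf, hf'⟩ := hdata.core ⟨p₀, hp₀⟩ hr hA
  have hrr : ((r - 1 : ℕ∞) : WithTop ℕ∞) + 1 ≤ r := by
    have : (r - 1) + 1 ≤ r := (tsub_add_cancel_of_le hr).le
    exact_mod_cast this
  have hrr' : ((r - 1 : ℕ∞) : WithTop ℕ∞) ≤ r := by
    have : r - 1 ≤ r := tsub_le_self
    exact_mod_cast this
  refine ⟨fun x => f (emPr n x), fun x => fderiv ℝ f (emPr n x) (0, 1) / v x (Fin.last n),
    hf.comp (emPr n).contDiff.contDiffOn hPr, ?_, ?_, ?_⟩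
  · refine ContDiffOn.div ?_ ((contDiffOn_pi.1 hv (Fin.last n)).of_le hrr') hvlast
    refine ContDiffOn.clm_apply ?_ contDiffOn_const
    exact (hf.fderiv_of_isOpen hDo' hrr).comp (emPr n).contDiff.contDiffOn hPr
  · intro x hx
    exact div_ne_zero (hf' _ (hPr x hx)).1 (hvlast x hx)
  · intro x hx u
    have hz := hPr x hx
    have hd : DifferentiableAt ℝ f (emPr n x) :=
      (hf.contDiffAt (hDo'.mem_nhds hz)).differentiableAt hr0
    have h1 : fderiv ℝ (fun x => f (emPr n x)) x = (fderiv ℝ f (emPr n x)).comp (emPr n) :=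
      (hd.hasFDerivAt.comp x (emPr n).hasFDerivAt).fderiv
    have hl := hvlast x hx
    have h2 := emA_apply v (emPr n x) (by rw [emJ_emPr]; exact hl) (emPr n u).1
    rw [emJ_emPr] at h2
    have h3 : emPr n u = ((emPr n u).1, emA v (emPr n x) (emPr n u).1) +
        (u (Fin.last n) - emA v (emPr n x) (emPr n u).1) • ((0 : Fin n → ℝ), (1:ℝ)) := by
      ext i
      · simp
      · simp [emPr_snd]
    rw [h1, ContinuousLinearMap.comp_apply, h3, map_add, map_smul, (hf' _ hz).2, zero_add,
      Fin.sum_univ_castSucc, smul_eq_mul]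
    simp only [emPr_fst] at h2 ⊢
    have h4 : ∑ i : Fin n, v x i.castSucc * u i.castSucc =
      - (v x (Fin.last n) * emA v (emPr n x) fun i => u i.castSucc) := by linarith
    rw [h4]
    field_simp
    ring

end EMHelpers

/-- Global existence of Euler's multiplier on an infinite cylinder `M = D × ℝ` over a
simply connected domain `D ⊆ ℝⁿ`, for a one-form `ω = Σ v^k dx_k` with nonvanishing
last component, bounded ratios `|v^i/v^{n+1}|` and satisfying the integrability
condition `ω ∧ dω = 0`. -/
theorem euler_multiplier_on_cylinder
    (n : ℕ) (hn : 1 ≤ n)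
    (D : Set (Fin n → ℝ)) (hDopen : IsOpen D) (hDconn : IsConnected D)
    (hDsc : SimplyConnectedSpace D)
    (r : ℕ∞) (hr : 1 ≤ r)
    (v : (Fin (n + 1) → ℝ) → (Fin (n + 1) → ℝ))
    (M : Set (Fin (n + 1) → ℝ)) (hM : M = {x | (fun i : Fin n => x i.castSucc) ∈ D})
    (hv : ContDiffOn ℝ (r : WithTop ℕ∞) v M)
    (hvlast : ∀ x ∈ M, v x (Fin.last n) ≠ 0)
    (hbound : ∃ C : ℝ, 0 < C ∧ ∀ x ∈ M, ∀ i : Fin n,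
      |v x i.castSucc| ≤ C * |v x (Fin.last n)|)
    (hint : ∀ x ∈ M, ∀ i j k : Fin (n + 1),
      v x i * (fderiv ℝ v x (Pi.single j 1) k - fderiv ℝ v x (Pi.single k 1) j)
        - v x j * (fderiv ℝ v x (Pi.single i 1) k - fderiv ℝ v x (Pi.single k 1) i)
        + v x k * (fderiv ℝ v x (Pi.single i 1) j - fderiv ℝ v x (Pi.single j 1) i)
        = 0) :
    ∃ (f : (Fin (n + 1) → ℝ) → ℝ) (lam : (Fin (n + 1) → ℝ) → ℝ),
      ContDiffOn ℝ (r : WithTop ℕ∞) f M ∧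
      ContDiffOn ℝ ((r - 1 : ℕ∞) : WithTop ℕ∞) lam M ∧
      (∀ x ∈ M, lam x ≠ 0) ∧
      ∀ x ∈ M, ∀ u : Fin (n + 1) → ℝ,
        fderiv ℝ f x u = lam x * ∑ k, v x k * u k := by
  exact em_main n D hDopen hDconn hDsc r hr v M hM hv hvlast hbound hint
end

section
/- Every nonempty, connected, non-compact, Hausdorff, second-countable topological manifold of dimension 1 (without boundary) is homeomorphic to ℝ. -/
open Set Topology Filter Function

namespace OneManifold

lemma isOpenEmbedding_of_inj {X : Type*} [TopologicalSpace X] [ChartedSpace ℝ X] {f : ℝ → X}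
    (hf : Continuous f) (hi : Injective f) : IsOpenEmbedding f := by
  refine .of_continuous_injective_isOpenMap hf hi (IsOpenMap.of_nhds_le fun t => ?_)
  intro s hs
  rw [Filter.mem_map] at hs
  set e := chartAt ℝ (f t) with he
  have hsrc : e.source ∈ 𝓝 (f t) := e.open_source.mem_nhds (mem_chart_source ℝ (f t))
  have h1 : f ⁻¹' s ∩ f ⁻¹' e.source ∈ 𝓝 t := inter_mem hs (hf.continuousAt hsrc)
  obtain ⟨δ, hδ, hb⟩ := Metric.nhds_basis_closedBall.mem_iff.1 h1
  rw [Real.closedBall_eq_Icc] at hb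
  have hc : ContinuousOn (e ∘ f) (Icc (t - δ) (t + δ)) :=
    e.continuousOn.comp hf.continuousOn fun x hx => (hb hx).2
  have hin : InjOn (e ∘ f) (Icc (t - δ) (t + δ)) := fun x hx y hy hxy =>
    hi (e.injOn (hb hx).2 (hb hy).2 hxy)
  have ht : t ∈ Icc (t - δ) (t + δ) := ⟨by linarith, by linarith⟩
  have hl : t - δ ∈ Icc (t - δ) (t + δ) := ⟨by linarith, by linarith⟩
  have hr : t + δ ∈ Icc (t - δ) (t + δ) := ⟨by linarith, by linarith⟩
  have key : (e ∘ f) '' Icc (t - δ) (t + δ) ∈ 𝓝 (e (f t)) := by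
    rcases hc.strictMonoOn_of_injOn_Icc' (by linarith) hin with h | h
    · exact mem_of_superset (Icc_mem_nhds (h hl ht (by linarith)) (h ht hr (by linarith)))
        (intermediate_value_Icc (by linarith) hc)
    · exact mem_of_superset (Icc_mem_nhds (h ht hr (by linarith)) (h hl ht (by linarith)))
        (intermediate_value_Icc' (by linarith) hc)
  have h2 := e.continuousAt (mem_chart_source ℝ (f t)) key
  filter_upwards [h2, hsrc] with y hy hys
  obtain ⟨x, hx, hxy⟩ := hy
  have : f x = y := e.injOn (hb hx).2 hys hxy
  exact this ▸ (hb hx).1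

lemma exists_arc {X : Type*} [TopologicalSpace X] [ChartedSpace ℝ X] (x : X) :
    ∃ f : ℝ → X, Continuous f ∧ Injective f ∧ x ∈ range f := by
  set e := chartAt ℝ x
  have h1 : e.target ∈ 𝓝 (e x) := e.open_target.mem_nhds (mem_chart_target ℝ x)
  obtain ⟨r, hr, hb⟩ := Metric.mem_nhds_iff.1 h1
  set u : OpenPartialHomeomorph ℝ ℝ := OpenPartialHomeomorph.univBall (e x) r
  have hs : u.source = univ := OpenPartialHomeomorph.univBall_source _ _
  have ht : u.target = Metric.ball (e x) r := OpenPartialHomeomorph.univBall_target _ hr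
  have hm : ∀ t, u t ∈ e.target := fun t => hb (ht ▸ u.map_source (hs ▸ mem_univ t))
  have hu : Continuous u := OpenPartialHomeomorph.continuous_univBall _ _
  refine ⟨e.symm ∘ u, ?_, ?_, 0, ?_⟩
  · exact e.continuousOn_symm.comp_continuous hu hm
  · intro a b hab
    have := e.symm.injOn (hm a) (hm b) hab
    exact u.injOn (hs ▸ mem_univ a) (hs ▸ mem_univ b) this
  · simp only [comp, u, OpenPartialHomeomorph.univBall_apply_zero]
    exact e.left_inv (mem_chart_source ℝ x)

lemma mono_Ico {φ : ℝ → ℝ} {a d : ℝ} (had : a < d) (hc : ContinuousOn φ (Ico a d))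
    (hi : InjOn φ (Ico a d)) : StrictMonoOn φ (Ico a d) ∨ StrictAntiOn φ (Ico a d) := by
  set m := (a + d) / 2 with hm
  have key : ∀ y ∈ Ico a d, StrictMonoOn φ (Icc a (max y m)) ∨ StrictAntiOn φ (Icc a (max y m)) := by
    intro y hy
    have hw : max y m < d := max_lt hy.2 (by linarith)
    have hsub : Icc a (max y m) ⊆ Ico a d := fun z hz => ⟨hz.1, hz.2.trans_lt hw⟩
    exact (hc.mono hsub).strictMonoOn_of_injOn_Icc' (le_max_of_le_left hy.1) (hi.mono hsub)
  have am : a < m := by linarith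
  rcases lt_or_ge (φ a) (φ m) with h | h
  · left
    intro x hx y hy hxy
    rcases key y hy with k | k
    · exact k ⟨hx.1, hxy.le.trans (le_max_left _ _)⟩ ⟨hy.1, le_max_left _ _⟩ hxy
    · have := k ⟨le_rfl, le_max_of_le_left hy.1⟩ ⟨am.le, le_max_right _ _⟩ am
      linarith
  · right
    intro x hx y hy hxy
    rcases key y hy with k | k
    · have := k ⟨le_rfl, le_max_of_le_left hy.1⟩ ⟨am.le, le_max_right _ _⟩ am
      linarith
    · exact k ⟨hx.1, hxy.le.trans (le_max_left _ _)⟩ ⟨hy.1, le_max_left _ _⟩ hxy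

lemma exit_core {X : Type*} [TopologicalSpace X] [T2Space X] {f g : ℝ → X}
    (hf : Continuous f) (hg : Continuous g) {φ : ℝ → ℝ} {a d : ℝ} (had : a < d)
    (hc : ContinuousOn φ (Ico a d)) (hφ : ∀ t ∈ Ico a d, g (φ t) = f t)
    (hm : StrictMonoOn φ (Ico a d)) (hd : f d ∉ range g) :
    f '' Ico a d = g '' Ici (φ a) := by
  have haI : a ∈ Ico a d := ⟨le_rfl, had⟩
  apply Subset.antisymm
  · rintro _ ⟨t, ht, rfl⟩
    exact ⟨φ t, hm.monotoneOn haI ht ht.1, hφ t ht⟩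
  · rintro _ ⟨s, hs, rfl⟩
    have : ∃ t ∈ Ico a d, s < φ t := by
      by_contra! hcon
      have hcl : IsClosed (g '' Icc (φ a) s) := (isCompact_Icc.image hg).isClosed
      have hsub : Ico a d ⊆ f ⁻¹' (g '' Icc (φ a) s) := fun t ht =>
        ⟨φ t, ⟨hm.monotoneOn haI ht ht.1, hcon t ht⟩, hφ t ht⟩
      have := closure_minimal hsub (hcl.preimage hf)
      rw [closure_Ico had.ne] at this
      exact hd (image_subset_range _ _ (this ⟨had.le, le_rfl⟩))
    obtain ⟨t, ht, hst⟩ := this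
    have hsub : Icc a t ⊆ Ico a d := fun z hz => ⟨hz.1, hz.2.trans_lt ht.2⟩
    obtain ⟨x, hx, hxs⟩ := intermediate_value_Icc ht.1 (hc.mono hsub) ⟨hs, hst.le⟩
    exact ⟨x, hsub hx, by rw [← hφ x (hsub hx), hxs]⟩

section
variable {X : Type*} [TopologicalSpace X] [T2Space X] [ChartedSpace ℝ X]

lemma exit_right {f g : ℝ → X} (hf : Continuous f) (hfi : Injective f)
    (hg : Continuous g) (hgi : Injective g) {a b s : ℝ} (hab : a < b)
    (ha : g s = f a) (hb : f b ∉ range g) :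
    ∃ d, a < d ∧ d ≤ b ∧ f d ∉ range g ∧
      (f '' Ico a d = g '' Ici s ∨ f '' Ico a d = g '' Iic s) := by
  have hgo := isOpenEmbedding_of_inj hg hgi
  set A := f ⁻¹' range g
  have hA : IsOpen A := hgo.isOpen_range.preimage hf
  set S := Icc a b ∩ Aᶜ
  have hS : IsClosed S := isClosed_Icc.inter hA.isClosed_compl
  have hSne : S.Nonempty := ⟨b, ⟨hab.le, le_rfl⟩, hb⟩
  have hSb : BddBelow S := ⟨a, fun x hx => hx.1.1⟩
  have hdS : sInf S ∈ S := hS.csInf_mem hSne hSb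
  set d := sInf S with hd
  have had : a < d := by
    refine lt_of_le_of_ne hdS.1.1 fun h => hdS.2 ?_
    rw [← h]; exact ⟨s, ha⟩
  have hsub : Ico a d ⊆ A := by
    intro t ht
    by_contra hcon
    exact absurd (csInf_le hSb (show t ∈ S from ⟨⟨ht.1, ht.2.le.trans hdS.1.2⟩, hcon⟩))
      (not_le.2 ht.2)
  set G := hgo.toOpenPartialHomeomorph g
  have hGt : G.target = range g := by simp [G]
  set φ := G.symm ∘ f
  have hφ : ∀ t ∈ Ico a d, g (φ t) = f t := fun t ht =>
    G.right_inv (x := f t) (hGt ▸ hsub ht)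
  have hc : ContinuousOn φ (Ico a d) :=
    G.continuousOn_symm.comp hf.continuousOn fun t ht => hGt ▸ hsub ht
  have hi : InjOn φ (Ico a d) := fun x hx y hy hxy => hfi (by rw [← hφ x hx, ← hφ y hy, hxy])
  have hφa : φ a = s := hgi (by rw [hφ a ⟨le_rfl, had⟩, ha])
  refine ⟨d, had, hdS.1.2, hdS.2, ?_⟩
  rcases mono_Ico had hc hi with h | h
  · left
    rw [exit_core hf hg had hc hφ h hdS.2, hφa]
  · right
    have := exit_core (g := fun x => g (-x)) (φ := fun x => - φ x) hf (by fun_prop) had hc.neg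
      (by simpa using hφ) h.neg (by
        rintro ⟨x, hx⟩
        exact hdS.2 ⟨-x, hx⟩)
    rw [this, hφa]
    ext y
    constructor
    · rintro ⟨x, hx, rfl⟩
      exact ⟨-x, by simpa using neg_le.1 hx, rfl⟩
    · rintro ⟨x, hx, rfl⟩
      exact ⟨-x, by simpa using hx, by simp⟩

lemma exit_left {f g : ℝ → X} (hf : Continuous f) (hfi : Injective f)
    (hg : Continuous g) (hgi : Injective g) {a b s : ℝ} (hab : b < a)
    (ha : g s = f a) (hb : f b ∉ range g) :
    ∃ d, d < a ∧ b ≤ d ∧ f d ∉ range g ∧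
      (f '' Ioc d a = g '' Ici s ∨ f '' Ioc d a = g '' Iic s) := by
  obtain ⟨d, h1, h2, h3, h4⟩ := exit_right (f := fun x => f (-x)) (g := g) (a := -a) (b := -b)
    (s := s) (by fun_prop) (hfi.comp neg_injective) hg hgi (by linarith) (by simpa) (by simpa using hb)
  refine ⟨-d, by linarith, by linarith, h3, ?_⟩
  have : f '' Ioc (-d) a = (fun x => f (-x)) '' Ico (-a) d := by
    ext y
    constructor
    · rintro ⟨x, hx, rfl⟩
      exact ⟨-x, ⟨by linarith [hx.2], by linarith [hx.1]⟩, by simp⟩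
    · rintro ⟨x, hx, rfl⟩
      exact ⟨-x, ⟨by linarith [hx.2], by linarith [hx.1]⟩, rfl⟩
  rwa [this]

/-- Gluing two arcs, with orientations fixed. -/
lemma glue_core [ConnectedSpace X] (hnc : ¬ CompactSpace X) {f g : ℝ → X}
    (hf : Continuous f) (hfi : Injective f)
    (hg : Continuous g) (hgi : Injective g) {a d s : ℝ} (had : a < d)
    (ha : g s = f a) (hd : f d ∉ range g) (hE : f '' Ico a d = g '' Ici s)
    (hV : ¬ range g ⊆ range f) :
    ∃ h : ℝ → X, Continuous h ∧ Injective h ∧ range f ⊆ range h ∧ range g ⊆ range h := by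
  obtain ⟨_, ⟨s', rfl⟩, hs'⟩ := not_subset.1 hV
  have hs's : s' < s := by
    by_contra! hcon
    have : g s' ∈ f '' Ico a d := hE ▸ mem_image_of_mem g hcon
    exact hs' (image_subset_range _ _ this)
  obtain ⟨e, hes, -, he, hE'⟩ := exit_left hg hgi hf hfi hs's ha.symm hs'
  have hE2 : g '' Ioc e s = f '' Iic a := by
    refine hE'.resolve_left fun h => hd ?_
    have : f d ∈ g '' Ioc e s := h ▸ mem_image_of_mem f had.le
    exact image_subset_range _ _ this
  by_cases hinj : ∀ t > a, ∀ s' < s, f t ≠ g s'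
  · refine ⟨fun x => if x ≤ s then g x else f (x - s + a), ?_, ?_, ?_, ?_⟩
    · refine Continuous.if_le hg (by fun_prop) continuous_id continuous_const ?_
      rintro x rfl
      simp [ha]
    · have aux : ∀ x y : ℝ, x ≤ s → s < y → g x ≠ f (y - s + a) := by
        intro x y hx hy h
        rcases hx.eq_or_lt with rfl | hx
        · rw [ha] at h
          have := hfi h
          linarith
        · exact hinj (y - s + a) (by linarith) x hx h.symm
      intro x y hxy
      simp only at hxy
      split_ifs at hxy with h1 h2 h2
      · exact hgi hxy
      · exact absurd hxy (aux x y h1 (not_le.1 h2))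
      · exact absurd hxy.symm (aux y x h2 (not_le.1 h1))
      · have := hfi hxy
        linarith
    · have hfa : ∀ t ≥ a, f t ∈ range (fun x => if x ≤ s then g x else f (x - s + a)) := by
        intro t ht
        rcases ht.eq_or_lt with rfl | ht
        · exact ⟨s, by simp [ha]⟩
        · refine ⟨t - a + s, ?_⟩
          have : ¬ (t - a + s ≤ s) := by linarith
          simp [this]
      rintro _ ⟨t, rfl⟩
      rcases le_total a t with h | h
      · exact hfa t h
      · have : f t ∈ g '' Ioc e s := hE2 ▸ mem_image_of_mem f h
        obtain ⟨x, hx, hxt⟩ := this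
        exact ⟨x, by simp [hx.2, hxt]⟩
    · rintro _ ⟨x, rfl⟩
      rcases le_or_gt x s with h | h
      · exact ⟨x, by simp [h]⟩
      · have : g x ∈ f '' Ico a d := hE ▸ mem_image_of_mem g h.le
        obtain ⟨t, ht, htx⟩ := this
        have hne : a ≠ t := by
          rintro rfl
          rw [← ha] at htx
          exact h.ne (hgi htx)
        have hlt : a < t := lt_of_le_of_ne ht.1 hne
        refine ⟨t - a + s, ?_⟩
        have : ¬ (t - a + s ≤ s) := by linarith
        simp [this, htx]
  · exfalso
    push Not at hinj
    obtain ⟨t, hat, r, hrs, htr⟩ := hinj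
    have hdt : d < t := by
      by_contra! hcon
      rcases hcon.eq_or_lt with rfl | hlt
      · exact hd ⟨r, htr.symm⟩
      · have : f t ∈ g '' Ici s := hE ▸ mem_image_of_mem f ⟨hat.le, hlt⟩
        obtain ⟨x, hx, hxt⟩ := this
        rw [htr] at hxt
        have := hgi hxt
        have hx' : s ≤ x := hx
        linarith
    obtain ⟨c, hct, hdc, -, hC⟩ := exit_left hf hfi hg hgi hdt htr.symm hd
    have hC2 : f '' Ioc c t = g '' Iic r := by
      refine hC.resolve_left fun h => ?_
      have : g s ∈ f '' Ioc c t := h ▸ mem_image_of_mem g hrs.le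
      obtain ⟨x, hx, hxs⟩ := this
      rw [ha] at hxs
      have := hfi hxs
      linarith [hx.1]
    have hcomp : IsCompact (f '' Icc a t ∪ g '' Icc r s) :=
      (isCompact_Icc.image hf).union (isCompact_Icc.image hg)
    have hEq : f '' Icc a t ∪ g '' Icc r s = f '' Ioo a t ∪ range g := by
      apply Subset.antisymm
      · apply union_subset
        · rintro _ ⟨x, hx, rfl⟩
          rcases hx.1.eq_or_lt with rfl | h1
          · exact Or.inr ⟨s, ha⟩
          rcases hx.2.eq_or_lt with rfl | h2
          · exact Or.inr ⟨r, htr.symm⟩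
          · exact Or.inl ⟨x, ⟨h1, h2⟩, rfl⟩
        · exact (image_subset_range _ _).trans subset_union_right
      · apply union_subset
        · exact (image_mono Ioo_subset_Icc_self).trans subset_union_left
        · rintro _ ⟨x, rfl⟩
          rcases le_total x r with h | h
          · left
            have : g x ∈ f '' Ioc c t := hC2 ▸ mem_image_of_mem g h
            obtain ⟨y, hy, hyx⟩ := this
            exact ⟨y, ⟨by linarith [hy.1], hy.2⟩, hyx⟩
          rcases le_total x s with h' | h'
          · exact Or.inr ⟨x, ⟨h, h'⟩, rfl⟩
          · left
            have : g x ∈ f '' Ico a d := hE ▸ mem_image_of_mem g h'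
            obtain ⟨y, hy, hyx⟩ := this
            exact ⟨y, ⟨hy.1, by linarith [hy.2]⟩, hyx⟩
    have hopen : IsOpen (f '' Icc a t ∪ g '' Icc r s) := by
      rw [hEq]
      exact ((isOpenEmbedding_of_inj hf hfi).isOpenMap _ isOpen_Ioo).union
        (isOpenEmbedding_of_inj hg hgi).isOpen_range
    have huniv := IsClopen.eq_univ ⟨hcomp.isClosed, hopen⟩
      ⟨g s, Or.inr ⟨s, ⟨hrs.le, le_rfl⟩, rfl⟩⟩
    exact hnc ⟨huniv ▸ hcomp⟩

lemma range_neg (f : ℝ → X) : range (fun x => f (-x)) = range f :=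
  neg_surjective.range_comp f

lemma glue_aux [ConnectedSpace X] (hnc : ¬ CompactSpace X) {f g : ℝ → X}
    (hf : Continuous f) (hfi : Injective f)
    (hg : Continuous g) (hgi : Injective g) {a b s : ℝ} (hab : a < b)
    (ha : g s = f a) (hb : f b ∉ range g)
    (hV : ¬ range g ⊆ range f) :
    ∃ h : ℝ → X, Continuous h ∧ Injective h ∧ range f ⊆ range h ∧ range g ⊆ range h := by
  obtain ⟨d, had, -, hd, hE | hE⟩ := exit_right hf hfi hg hgi hab ha hb
  · exact glue_core hnc hf hfi hg hgi had ha hd hE hV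
  · have := glue_core (g := fun x => g (-x)) (s := -s) hnc hf hfi (by fun_prop)
      (hgi.comp neg_injective) had (by simpa) (by rwa [range_neg]) (by
        rw [hE]
        ext y
        constructor
        · rintro ⟨x, hx, rfl⟩
          exact ⟨-x, by simpa using hx, by simp⟩
        · rintro ⟨x, hx, rfl⟩
          exact ⟨-x, by simpa using neg_le.1 hx, rfl⟩) (by rwa [range_neg])
    rwa [range_neg] at this

lemma glue [ConnectedSpace X] (hnc : ¬ CompactSpace X) {f g : ℝ → X}
    (hf : Continuous f) (hfi : Injective f)
    (hg : Continuous g) (hgi : Injective g) (hne : (range f ∩ range g).Nonempty) :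
    ∃ h : ℝ → X, Continuous h ∧ Injective h ∧ range f ⊆ range h ∧ range g ⊆ range h := by
  by_cases hV : range g ⊆ range f
  · exact ⟨f, hf, hfi, Subset.rfl, hV⟩
  by_cases hU : range f ⊆ range g
  · exact ⟨g, hg, hgi, hU, Subset.rfl⟩
  obtain ⟨_, ⟨b, rfl⟩, hb⟩ := not_subset.1 hU
  obtain ⟨_, ⟨a, rfl⟩, ⟨s, hs⟩⟩ := hne
  rcases lt_trichotomy a b with h | rfl | h
  · exact glue_aux hnc hf hfi hg hgi h hs hb hV
  · exact absurd ⟨s, hs⟩ hb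
  · have := glue_aux (f := fun x => f (-x)) (a := -a) (b := -b) (s := s) hnc (by fun_prop)
      (hfi.comp neg_injective) hg hgi (by linarith) (by simpa) (by simpa using hb) (by rwa [range_neg])
    rwa [range_neg] at this

lemma directed [ConnectedSpace X] (hnc : ¬ CompactSpace X) {f g : ℝ → X}
    (hf : Continuous f) (hfi : Injective f)
    (hg : Continuous g) (hgi : Injective g) :
    ∃ h : ℝ → X, Continuous h ∧ Injective h ∧ range f ⊆ range h ∧ range g ⊆ range h := by
  set S : Set X := {q | ∃ h : ℝ → X, Continuous h ∧ Injective h ∧ f 0 ∈ range h ∧ q ∈ range h}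
  have hSo : IsOpen S := by
    rw [isOpen_iff_forall_mem_open]
    rintro q ⟨h, h1, h2, h3, h4⟩
    exact ⟨range h, fun y hy => ⟨h, h1, h2, h3, hy⟩, (isOpenEmbedding_of_inj h1 h2).isOpen_range, h4⟩
  have hSc : IsClosed S := by
    rw [← isOpen_compl_iff, isOpen_iff_forall_mem_open]
    intro q hq
    obtain ⟨k, k1, k2, k3⟩ := exists_arc q
    refine ⟨range k, fun y hy hyS => hq ?_, (isOpenEmbedding_of_inj k1 k2).isOpen_range, k3⟩
    obtain ⟨h, h1, h2, h3, h4⟩ := hyS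
    obtain ⟨l, l1, l2, l3, l4⟩ := glue hnc h1 h2 k1 k2 ⟨y, h4, hy⟩
    exact ⟨l, l1, l2, l3 h3, l4 k3⟩
  have hSu : S = univ := IsClopen.eq_univ ⟨hSc, hSo⟩ ⟨f 0, f, hf, hfi, ⟨0, rfl⟩, ⟨0, rfl⟩⟩
  obtain ⟨h, h1, h2, h3, h4⟩ : g 0 ∈ S := hSu ▸ mem_univ _
  obtain ⟨k, k1, k2, k3, k4⟩ := glue hnc hf hfi h1 h2 ⟨f 0, ⟨0, rfl⟩, h3⟩
  obtain ⟨l, l1, l2, l3, l4⟩ := glue hnc k1 k2 hg hgi ⟨g 0, k4 h4, ⟨0, rfl⟩⟩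
  exact ⟨l, l1, l2, k3.trans l3, l4⟩

lemma compact_in_arc [ConnectedSpace X] (hnc : ¬ CompactSpace X) {K : Set X} (hK : IsCompact K) :
    ∃ h : ℝ → X, Continuous h ∧ Injective h ∧ K ⊆ range h := by
  refine hK.induction_on (p := fun K => ∃ h : ℝ → X, Continuous h ∧ Injective h ∧ K ⊆ range h)
    ?_ ?_ ?_ ?_
  · obtain ⟨x⟩ := (inferInstance : Nonempty X)
    obtain ⟨f, h1, h2, -⟩ := exists_arc x
    exact ⟨f, h1, h2, empty_subset _⟩
  · rintro s t hst ⟨f, h1, h2, h3⟩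
    exact ⟨f, h1, h2, hst.trans h3⟩
  · rintro s t ⟨f, h1, h2, h3⟩ ⟨g, k1, k2, k3⟩
    obtain ⟨l, l1, l2, l3, l4⟩ := directed hnc h1 h2 k1 k2
    exact ⟨l, l1, l2, union_subset (h3.trans l3) (k3.trans l4)⟩
  · intro x _
    obtain ⟨f, h1, h2, h3⟩ := exists_arc x
    exact ⟨range f, mem_nhdsWithin_of_mem_nhds
      ((isOpenEmbedding_of_inj h1 h2).isOpen_range.mem_nhds h3), f, h1, h2, Subset.rfl⟩

lemma step_core {f g : ℝ → X} (hg : Continuous g) (hgi : Injective g)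
    {φ : ℝ → ℝ} (hφ : Continuous φ) (hm : StrictMono φ) (hφf : ∀ t, g (φ t) = f t)
    {K : Set X} (hK : IsCompact K) (hKg : K ⊆ range g) (n : ℕ) :
    ∃ h : ℝ → X, (Continuous h ∧ Injective h) ∧ EqOn h f (Icc (-n) n) ∧
      K ⊆ h '' Icc (-(n + 1 : ℕ)) (n + 1 : ℕ) := by
  have hgo := isOpenEmbedding_of_inj hg hgi
  have hcK : IsCompact (g ⁻¹' K) := hgo.isInducing.isCompact_preimage' hK hKg
  obtain ⟨R, hR⟩ := hcK.isBounded.subset_closedBall 0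
  rw [Real.closedBall_eq_Icc] at hR
  set M : ℝ := 1 + |R| + |φ n| + |φ (-n)|
  have hM : 0 < M := by positivity
  set c : ℝ → ℝ := fun x => max (-n) (min n x) with hc
  have hn : (0 : ℝ) ≤ n := n.cast_nonneg
  have hcc : Continuous c := by fun_prop
  have hcm : ∀ x y, x ≤ y → c x ≤ c y := fun x y h => max_le_max le_rfl (min_le_min le_rfl h)
  have hcd : ∀ x y, x ≤ y → x - c x ≤ y - c y := by
    intro x y h
    simp only [hc]
    rcases max_cases (-(n:ℝ)) (min n x) with h1 | h1 <;>
    rcases max_cases (-(n:ℝ)) (min n y) with h2 | h2 <;>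
    rcases min_cases (n:ℝ) x with h3 | h3 <;>
    rcases min_cases (n:ℝ) y with h4 | h4 <;> linarith
  set ψ : ℝ → ℝ := fun x => φ (c x) + M * (x - c x) with hψ
  have hψc : Continuous ψ := by fun_prop
  have hψm : StrictMono ψ := by
    intro x y hxy
    rcases (hcm x y hxy.le).eq_or_lt with h | h
    · simp only [hψ, h]
      nlinarith
    · have h1 := hm h
      have h2 := mul_le_mul_of_nonneg_left (hcd x y hxy.le) hM.le
      simp only [hψ]
      linarith
  refine ⟨g ∘ ψ, ⟨hg.comp hψc, hgi.comp hψm.injective⟩, ?_, ?_⟩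
  · intro x hx
    have : c x = x := by simp [hc, hx.1, hx.2]
    simp [hψ, this, hφf]
  · intro y hy
    obtain ⟨s, rfl⟩ := hKg hy
    have hs := hR (show s ∈ g ⁻¹' K from hy)
    have hle : (-(n + 1 : ℕ) : ℝ) ≤ (n + 1 : ℕ) := by push_cast; linarith
    have h1 : ψ (-(n + 1 : ℕ)) ≤ s := by
      have : c (-(n + 1 : ℕ)) = -n := by
        simp only [hc]
        push_cast
        rw [min_eq_right (by linarith), max_eq_left (by linarith)]
      simp only [hψ, this]
      push_cast
      have := hs.1
      have := le_abs_self R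
      have := le_abs_self (φ (-n))
      have := abs_nonneg (φ n)
      simp only [M]
      linarith
    have h2 : s ≤ ψ ((n + 1 : ℕ)) := by
      have : c ((n + 1 : ℕ)) = n := by
        simp only [hc]
        push_cast
        rw [min_eq_left (by linarith), max_eq_right (by linarith)]
      simp only [hψ, this]
      push_cast
      have := hs.2
      have := le_abs_self R
      have := neg_abs_le (φ n)
      have := abs_nonneg (φ (-n))
      simp only [M]
      linarith
    obtain ⟨x, hx, hxs⟩ := intermediate_value_Icc hle hψc.continuousOn ⟨h1, h2⟩
    exact ⟨x, hx, by simp [hxs]⟩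

lemma step [ConnectedSpace X] (hnc : ¬ CompactSpace X) {f : ℝ → X}
    (hf : Continuous f ∧ Injective f) {K : Set X} (hK : IsCompact K) (n : ℕ) :
    ∃ h : ℝ → X, (Continuous h ∧ Injective h) ∧ EqOn h f (Icc (-n) n) ∧
      K ⊆ h '' Icc (-(n + 1 : ℕ)) (n + 1 : ℕ) := by
  obtain ⟨k, k1, k2, k3⟩ := compact_in_arc hnc hK
  obtain ⟨g, g1, g2, g3, g4⟩ := directed hnc hf.1 hf.2 k1 k2
  have hgo := isOpenEmbedding_of_inj g1 g2
  choose φ hφ using fun t => g3 (mem_range_self t)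
  have hφc : Continuous φ := by
    rw [hgo.isInducing.continuous_iff]
    have : g ∘ φ = f := funext hφ
    rw [this]; exact hf.1
  have hφi : Injective φ := fun x y hxy => hf.2 (by rw [← hφ, ← hφ, hxy])
  rcases hφc.strictMono_of_inj hφi with h | h
  · exact step_core g1 g2 hφc h hφ hK (k3.trans g4) n
  · refine step_core (g := fun x => g (-x)) (φ := fun x => - φ x) (by fun_prop)
      (g2.comp neg_injective) hφc.neg h.neg (by simpa using hφ) hK ?_ n
    rw [range_neg]
    exact k3.trans g4

end

end OneManifold

open OneManifold
/-- Every nonempty, connected, non-compact, Hausdorff, second-countable topological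
1-manifold (without boundary) is homeomorphic to `ℝ`. -/
theorem noncompact_one_manifold_homeomorph_real
    (X : Type*) [TopologicalSpace X] [Nonempty X] [ConnectedSpace X]
    [T2Space X] [SecondCountableTopology X] [ChartedSpace ℝ X]
    (hnc : ¬ CompactSpace X) :
    Nonempty (X ≃ₜ ℝ) := by
  have : LocallyCompactSpace X := ChartedSpace.locallyCompactSpace ℝ X
  have : SigmaCompactSpace X := sigmaCompactSpace_of_locallyCompact_secondCountable
  obtain ⟨x⟩ := (inferInstance : Nonempty X)
  obtain ⟨f₀, h1, h2, -⟩ := exists_arc x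
  choose F hF hFE hFK using fun (n : ℕ) (f : {f : ℝ → X // Continuous f ∧ Injective f}) =>
    step hnc f.2 (isCompact_compactCovering X n) n
  let u : ℕ → {f : ℝ → X // Continuous f ∧ Injective f} :=
    fun n => Nat.rec ⟨f₀, h1, h2⟩ (fun n f => ⟨F n f, hF n f⟩) n
  have hu : ∀ n, EqOn (u (n + 1)).1 (u n).1 (Icc (-n) n) := fun n => hFE n (u n)
  have hK : ∀ n, compactCovering X n ⊆ (u (n + 1)).1 '' Icc (-(n + 1 : ℕ)) (n + 1 : ℕ) :=
    fun n => hFK n (u n)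
  have hmono : ∀ n m, n ≤ m → EqOn (u m).1 (u n).1 (Icc (-n) n) := by
    intro n m h
    induction m, h using Nat.le_induction with
    | base => exact fun _ _ => rfl
    | succ m hm ih =>
      intro t ht
      have : (n : ℝ) ≤ m := by exact_mod_cast hm
      rw [hu m ⟨by linarith [ht.1], by linarith [ht.2]⟩, ih ht]
  let f : ℝ → X := fun t => (u ⌈|t|⌉₊).1 t
  have hf : ∀ n : ℕ, EqOn f (u n).1 (Icc (-n) n) := by
    intro n t ht
    exact (hmono ⌈|t|⌉₊ n (Nat.ceil_le.2 (abs_le.2 ht)) (abs_le.1 (Nat.le_ceil _))).symm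
  have hfc : Continuous f := by
    rw [continuous_iff_continuousAt]
    intro t
    obtain ⟨n, hn⟩ := exists_nat_gt |t|
    have h := abs_lt.1 hn
    exact (u n).2.1.continuousAt.congr
      ((hf n).symm.eventuallyEq_of_mem (Icc_mem_nhds h.1 h.2))
  have hfi : Injective f := by
    intro s t hst
    obtain ⟨n, hn⟩ := exists_nat_gt (max |s| |t|)
    have hs := abs_le.1 ((le_max_left _ _).trans hn.le)
    have ht := abs_le.1 ((le_max_right _ _).trans hn.le)
    rw [hf n hs, hf n ht] at hst
    exact (u n).2.2 hst
  have hfs : Surjective f := by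
    intro y
    have : y ∈ ⋃ n, compactCovering X n := iUnion_compactCovering X ▸ mem_univ y
    obtain ⟨n, hn⟩ := mem_iUnion.1 this
    obtain ⟨t, ht, hty⟩ := hK n hn
    exact ⟨t, by rw [hf (n + 1) ht, hty]⟩
  exact ⟨((Equiv.ofBijective f ⟨hfi, hfs⟩).toHomeomorphOfContinuousOpen hfc
    (isOpenEmbedding_of_inj hfc hfi).isOpenMap).symm⟩
end
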